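/- arXiv:2201.00984 — 2 statements merged into one kernel-verified Lean document; each statement's English description precedes it below -/
import Mathlib

section
/- Let (R, m, k) be a Cohen–Macaulay commutative Noetherian local ring of dimension d with minimal multiplicity, i.e., there exists an R-regular sequence x₁, …, x_d ∈ m with m² = (x₁, …, x_d)m. Let M and N be finitely generated R-modules and set t = depth_R M. If Tor_i^R(M, N) = 0 for some d+1 consecutive values of i with all these values ≥ d − t + 2, then either pd_R M < ∞ or pd_R N < ∞, and moreover Tor_i^R(M, N) = 0 for all i ≥ d − t + 1. -/
open CategoryTheory IsLocalRing

section Prelim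

variable (R : Type) [CommRing R]

/-- `Tor_i^R(M, N) = 0`. -/
noncomputable def TorVanish (M N : Type) [AddCommGroup M] [Module R M]
    [AddCommGroup N] [Module R N] (i : ℕ) : Prop :=
  Subsingleton (((Tor (ModuleCat R) i).obj (ModuleCat.of R M)).obj (ModuleCat.of R N))

/-- `Ext_R^i(M, N) = 0`. -/
noncomputable def ExtVanish (M N : Type) [AddCommGroup M] [Module R M]
    [AddCommGroup N] [Module R N] (i : ℕ) : Prop :=
  Subsingleton (((Ext R (ModuleCat R) i).obj (Opposite.op (ModuleCat.of R M))).obj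
    (ModuleCat.of R N))

/-- `pd_R M < n`, expressed by the standard characterization
`Ext_R^i(M, -) = 0` for all `i ≥ n`. -/
def ProjDimLT (M : Type) [AddCommGroup M] [Module R M] (n : ℕ) : Prop :=
  ∀ (N : ModuleCat R) (i : ℕ), n ≤ i → ExtVanish R M N i

/-- `pd_R M < ∞`. -/
def ProjDimFinite (M : Type) [AddCommGroup M] [Module R M] : Prop :=
  ∃ n, ProjDimLT R M n

/-- `id_R M < n`, expressed by the standard characterization
`Ext_R^i(-, M) = 0` for all `i ≥ n`. -/
def InjDimLT (M : Type) [AddCommGroup M] [Module R M] (n : ℕ) : Prop :=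
  ∀ (N : ModuleCat R) (i : ℕ), n ≤ i → ExtVanish R N M i

/-- `id_R M < ∞`. -/
def InjDimFinite (M : Type) [AddCommGroup M] [Module R M] : Prop :=
  ∃ n, InjDimLT R M n

/-- `M` is a Tor-rigid `R`-module. -/
def TorRigid (M : Type) [AddCommGroup M] [Module R M] : Prop :=
  ∀ (N : ModuleCat R), Module.Finite R N → ∀ n : ℕ, 1 ≤ n → TorVanish R M N n →
    ∀ i : ℕ, n ≤ i → TorVanish R M N i

variable [IsLocalRing R]

/-- The depth of `M`: the supremum of lengths of `M`-regular sequences contained in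
the maximal ideal. -/
noncomputable def depth (M : Type) [AddCommGroup M] [Module R M] : ℕ∞ :=
  sSup {n : ℕ∞ | ∃ rs : List R, (∀ x ∈ rs, x ∈ maximalIdeal R) ∧
    RingTheory.Sequence.IsRegular M rs ∧ (rs.length : ℕ∞) = n}

/-- The dimension of a module, i.e. the Krull dimension of `R ⧸ ann M`. -/
noncomputable def moduleDim (M : Type) [AddCommGroup M] [Module R M] : WithBot ℕ∞ :=
  ringKrullDim (R ⧸ Module.annihilator R M)

/-- `M` is an Ulrich `R`-module of dimension `s` : `M` is nonzero, Cohen–Macaulay of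
dimension `s`, and there is an `M`-regular sequence `x₁, …, x_s` in the maximal ideal
with `mM = (x₁, …, x_s)M`. -/
def IsUlrich (M : Type) [AddCommGroup M] [Module R M] (s : ℕ) : Prop :=
  Nontrivial M ∧ moduleDim R M = (s : ℕ∞) ∧ depth R M = (s : ℕ∞) ∧
  ∃ rs : List R, rs.length = s ∧ (∀ x ∈ rs, x ∈ maximalIdeal R) ∧
    RingTheory.Sequence.IsRegular M rs ∧
    (maximalIdeal R) • (⊤ : Submodule R M) = (Ideal.ofList rs) • ⊤

/-- `R` is a regular local ring: the maximal ideal is generated by `dim R` elements. -/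
def IsRegularLocal : Prop :=
  ∃ s : Finset R, Ideal.span (s : Set R) = maximalIdeal R ∧
    (s.card : WithBot ℕ∞) = ringKrullDim R

/-- `R` (of dimension `d`) has minimal multiplicity: there is an `R`-regular sequence
`x₁, …, x_d` in the maximal ideal `m` with `m² = (x₁, …, x_d)m`. -/
def HasMinimalMultiplicity (d : ℕ) : Prop :=
  ∃ rs : List R, rs.length = d ∧ (∀ x ∈ rs, x ∈ maximalIdeal R) ∧
    RingTheory.Sequence.IsWeaklyRegular R rs ∧
    maximalIdeal R ^ 2 = Ideal.ofList rs * maximalIdeal R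

/-- The `n`-th Betti number of `M` over the local ring `R`, i.e. the dimension over the
residue field `k = R ⧸ m` of `Tor_n^R(M, k)` (which is an `m`-torsion module, so we take
the dimension of its reduction mod `m`). -/
noncomputable def betti (M : Type) [AddCommGroup M] [Module R M] (n : ℕ) : ℕ :=
  Module.finrank (R ⧸ maximalIdeal R)
    ((((Tor (ModuleCat R) n).obj (ModuleCat.of R M)).obj
        (ModuleCat.of R (R ⧸ maximalIdeal R))) ⧸
      (maximalIdeal R • (⊤ : Submodule R
        (((Tor (ModuleCat R) n).obj (ModuleCat.of R M)).obj
          (ModuleCat.of R (R ⧸ maximalIdeal R))))))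

end Prelim

/-!
Put `t = depth M`. A syzygy `X` of `M` of order `d - t` is maximal Cohen–Macaulay or zero, and `M`
may be replaced by `X`. Let `L` be the kernel of a minimal free cover of `X`, and let `xs` be the
sequence with `m² = (xs)m`. Since `xs` is `X`-regular and `L ⊆ mF`, minimal multiplicity forces
`mL ⊆ (xs)L`, so that `L/(xs)L` is a `k`-vector space. The `d + 1` vanishing Tor modules, pushed
down the regular sequence, give `Torⱼ(L/(xs)L, N) = 0` for one `j ≥ 1`. Hence either `L = 0` and `X`
is free, or `k` is a direct summand of `L/(xs)L`, so that `Torⱼ(k, N) = 0` and `pd N < ∞`.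

In the second case `Torᵢ(X, N) = 0` for all `i ≥ 1` by induction on `dim R`: for a syzygy
`0 → K → F → N → 0`, the module `N` is free at the associated primes of `R`, so the kernel of
`X ⊗ K → X ⊗ F` is killed by a regular element `s`. Either `s` is a unit, or reduction modulo `s`
and the induction hypothesis for the next syzygy show that `s` is regular on `X ⊗ K`. Both ways the
kernel vanishes.
-/

open scoped Pointwise TensorProduct
open RingTheory.Sequence (IsWeaklyRegular)

universe u

/-- `M` has depth at least `n`, in the sense that the maximal ideal contains a weakly `M`-regular
sequence of length `n`. Asking only for weak regularity gives the zero module infinite depth. -/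
def HasDepthGE (R : Type*) [CommRing R] [IsLocalRing R] (n : ℕ) (M : Type*) [AddCommGroup M]
    [Module R M] : Prop :=
  ∃ rs : List R, rs.length = n ∧ (∀ r ∈ rs, r ∈ maximalIdeal R) ∧ IsWeaklyRegular M rs

namespace HasDepthGE

section

variable {R : Type*} [CommRing R] [IsLocalRing R] {M : Type*} [AddCommGroup M] [Module R M]

theorem zero (R M : Type*) [CommRing R] [IsLocalRing R] [AddCommGroup M] [Module R M] :
    HasDepthGE R 0 M :=
  ⟨[], rfl, by simp, .nil R M⟩

theorem mono {m n : ℕ} (h : HasDepthGE R n M) (hmn : m ≤ n) : HasDepthGE R m M := by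
  obtain ⟨rs, hlen, hmem, hreg⟩ := h
  rw [← List.take_append_drop m rs, RingTheory.Sequence.isWeaklyRegular_append_iff] at hreg
  exact ⟨rs.take m, by simp [hlen, hmn], fun r hr => hmem r (List.mem_of_mem_take hr), hreg.1⟩

theorem congr {n : ℕ} {M' : Type*} [AddCommGroup M'] [Module R M'] (e : M ≃ₗ[R] M')
    (h : HasDepthGE R n M) : HasDepthGE R n M' := by
  obtain ⟨rs, hlen, hmem, hreg⟩ := h
  exact ⟨rs, hlen, hmem, (e.isWeaklyRegular_congr rs).1 hreg⟩

theorem of_flat {n : ℕ} (h : HasDepthGE R n R) (F : Type*) [AddCommGroup F] [Module R F]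
    [Module.Flat R F] : HasDepthGE R n F := by
  obtain ⟨rs, hlen, hmem, hreg⟩ := h
  exact ⟨rs, hlen, hmem,
    ((TensorProduct.rid R F).isWeaklyRegular_congr rs).1 hreg.isWeaklyRegular_lTensor⟩

theorem of_isLocalHom (S : Type*) [CommRing S] [IsLocalRing S] [Algebra R S]
    [IsLocalHom (algebraMap R S)] [Module S M] [IsScalarTower R S M] {n : ℕ}
    (h : HasDepthGE R n M) : HasDepthGE S n M := by
  obtain ⟨rs, hlen, hmem, hreg⟩ := h
  refine ⟨rs.map (algebraMap R S), by simpa, ?_,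
    (RingTheory.Sequence.isWeaklyRegular_map_algebraMap_iff S M rs).2 hreg⟩
  simpa [mem_maximalIdeal] using hmem

theorem of_le_depth {R : Type} [CommRing R] [IsLocalRing R] {M : Type} [AddCommGroup M]
    [Module R M] {n : ℕ} (h : (n : ℕ∞) ≤ depth R M) : HasDepthGE R n M := by
  cases n with
  | zero => exact zero R M
  | succ n =>
    have hlt : (n : ℕ∞) < depth R M := (Nat.cast_lt.2 n.lt_succ_self).trans_le h
    obtain ⟨_, ⟨rs, hmem, hreg, rfl⟩, hn⟩ := lt_sSup_iff.1 hlt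
    exact mono ⟨rs, rfl, hmem, hreg.toIsWeaklyRegular⟩ (Nat.cast_lt.1 hn)

theorem of_subsingleton (n : ℕ) [Subsingleton M] : HasDepthGE R n M := by
  refine ⟨List.replicate n 0, List.length_replicate, ?_, ?_⟩
  · intro r hr
    exact List.eq_of_mem_replicate hr ▸ zero_mem _
  · exact ⟨fun i hi => Function.injective_of_subsingleton _⟩

end

section

variable {R : Type u} [CommRing R] [IsLocalRing R] [IsNoetherianRing R]

/-- Rees' theorem; the residue field is written in the form in which `Abelian.Ext` meets it in
`ModuleCat.exists_isRegular_tfae`. -/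
theorem iff_subsingleton_ext (n : ℕ) (M : Type u) [AddCommGroup M] [Module R M]
    [Module.Finite R M] :
    HasDepthGE R n M ↔ ∀ i < n, Subsingleton
      (Abelian.Ext (ModuleCat.of R (Shrink.{u} (R ⧸ maximalIdeal R))) (ModuleCat.of R M) i) := by
  rcases subsingleton_or_nontrivial M with hM | hM
  · have hzero : Limits.IsZero (ModuleCat.of R M) := ModuleCat.isZero_of_subsingleton _
    refine iff_of_true (of_subsingleton n) fun i _ => ?_
    exact AddCommGrpCat.subsingleton_of_isZero ((Abelian.extFunctorObj _ i).map_isZero hzero)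
  · have hlt : maximalIdeal R • (⊤ : Submodule R M) < ⊤ :=
      (Submodule.top_ne_ideal_smul_of_le_jacobson_annihilator
        (maximalIdeal_le_jacobson _)).symm.lt_top
    have hrees :=
      (ModuleCat.exists_isRegular_tfae (maximalIdeal R) n (ModuleCat.of R M) hlt).out 1 3
    rw [hrees]
    refine exists_congr fun rs => and_congr_right fun _ => and_congr_right fun hmem => ?_
    exact (isRegular_iff_isWeaklyRegular_of_subset_maximalIdeal hmem).symm

variable {A B C : Type u} [AddCommGroup A] [Module R A] [Module.Finite R A]
  [AddCommGroup B] [Module R B] [Module.Finite R B] [AddCommGroup C] [Module R C]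
  [Module.Finite R C] {f : A →ₗ[R] B} {g : B →ₗ[R] C}

theorem left_of_exact (hf : Function.Injective f) (hfg : Function.Exact f g)
    (hg : Function.Surjective g) {n : ℕ} (hB : HasDepthGE R (n + 1) B) (hC : HasDepthGE R n C) :
    HasDepthGE R (n + 1) A := by
  rw [iff_subsingleton_ext] at hB hC ⊢
  have hS := ModuleCat.shortComplex_shortExact
    (ModuleCat.shortComplexOfCompEqZero f g hfg.linearMap_comp_eq_zero) hfg hf hg
  have := hS.mono_f
  rintro (_ | i) hi
  · have := hB 0 hi
    exact (Abelian.Ext.postcomp_mk₀_injective_of_mono _ (ModuleCat.ofHom f)).subsingleton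
  · have := hB (i + 1) hi
    have := hC i (by omega)
    refine subsingleton_of_forall_eq 0 fun a => ?_
    obtain ⟨c, rfl⟩ :=
      Abelian.Ext.covariant_sequence_exact₁ _ hS (n₀ := i) a (Subsingleton.elim _ _) rfl
    rw [Subsingleton.elim c 0, Abelian.Ext.zero_comp]

theorem ker {n : ℕ} (hR : HasDepthGE R n R) [Module.Flat R B] (hg : Function.Surjective g)
    (hC : HasDepthGE R (n - 1) C) : HasDepthGE R n (LinearMap.ker g) := by
  cases n with
  | zero => exact zero R _
  | succ n =>
    exact left_of_exact (Submodule.subtype_injective _) (LinearMap.exact_subtype_ker_map g) hg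
      (hR.of_flat B) hC

theorem right_of_exact (hf : Function.Injective f) (hfg : Function.Exact f g)
    (hg : Function.Surjective g) {n : ℕ} (hA : HasDepthGE R (n + 1) A) (hB : HasDepthGE R n B) :
    HasDepthGE R n C := by
  rw [iff_subsingleton_ext] at hA hB ⊢
  have hS := ModuleCat.shortComplex_shortExact
    (ModuleCat.shortComplexOfCompEqZero f g hfg.linearMap_comp_eq_zero) hfg hf hg
  intro i hi
  have := hA (i + 1) (by omega)
  have := hB i hi
  refine subsingleton_of_forall_eq 0 fun c => ?_
  obtain ⟨b, rfl⟩ :=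
    Abelian.Ext.covariant_sequence_exact₃ _ hS (n₀ := i) c rfl (Subsingleton.elim _ _)
  rw [Subsingleton.elim b 0, Abelian.Ext.zero_comp]

theorem quotSMulTop {M : Type u} [AddCommGroup M] [Module R M] [Module.Finite R M] {n : ℕ}
    (h : HasDepthGE R (n + 1) M) {s : R} (hs : IsSMulRegular M s) :
    HasDepthGE R n (QuotSMulTop s M) :=
  right_of_exact (f := LinearMap.lsmul R M s) hs (LinearMap.exact_lsmul_mkQ_smul_top M s)
    (Submodule.mkQ_surjective _) h (h.mono n.le_succ)

end

end HasDepthGE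

section AssociatedPrimes

theorem torsionBySet_inf_smul_top_le {R M : Type*} [CommRing R] [AddCommGroup M] [Module R M]
    (a : Set R) {x : R} (hx : IsSMulRegular M x) :
    Submodule.torsionBySet R M a ⊓ x • ⊤ ≤ x • Submodule.torsionBySet R M a := by
  rintro _ ⟨htors, hmem⟩
  obtain ⟨v, -, rfl⟩ := (Submodule.mem_smul_pointwise_iff_exists _ _ _).1 hmem
  refine Submodule.smul_mem_pointwise_smul _ _ _ ?_
  refine (Submodule.mem_torsionBySet_iff _ _).2 fun r => ?_
  apply hx
  simpa only [smul_comm x, smul_zero] using (Submodule.mem_torsionBySet_iff _ _).1 htors r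

variable {R : Type*} [CommRing R] [IsNoetherianRing R] {M : Type*} [AddCommGroup M] [Module R M]

theorem isSMulRegular_iff_forall_notMem_associatedPrimes {r : R} :
    IsSMulRegular M r ↔ ∀ p ∈ associatedPrimes R M, r ∉ p := by
  have h := Set.ext_iff.1 (biUnion_associatedPrimes_eq_compl_regular R M) r
  rw [← not_iff_not]
  simpa using h.symm

variable [IsLocalRing R]

theorem exists_gt_mem_associatedPrimes_quotSMulTop [Module.Finite R M] {x : R}
    (hx : x ∈ maximalIdeal R) (hreg : IsSMulRegular M x) {p : Ideal R}
    (hp : p ∈ associatedPrimes R M) : ∃ q ∈ associatedPrimes R (QuotSMulTop x M), p < q := by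
  let T := Submodule.torsionBySet R M (p : Set R)
  have hT : T ≠ ⊥ := by
    obtain ⟨hprime, y, hy⟩ := isAssociatedPrime_iff.1 hp
    refine fun hbot => hprime.ne_top ?_
    have hyT : y ∈ T := (Submodule.mem_torsionBySet_iff _ _).2 fun a => by
      simpa [hy, Submodule.mem_colon_singleton] using a.2
    rw [hy, (Submodule.eq_bot_iff T).1 hbot y hyT]
    simp
  have hTx : ¬ T ≤ x • ⊤ := fun hle => hT <| by
    refine Submodule.eq_bot_of_le_smul_of_le_jacobson_bot (maximalIdeal R) T
      (IsNoetherian.noetherian _) ?_ (maximalIdeal_le_jacobson _)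
    calc T ≤ x • T := (le_inf le_rfl hle).trans (torsionBySet_inf_smul_top_le _ hreg)
      _ = Ideal.span {x} • T := (Submodule.ideal_span_singleton_smul x T).symm
      _ ≤ maximalIdeal R • T :=
        Submodule.smul_mono_left ((Ideal.span_singleton_le_iff_mem _).2 hx)
  obtain ⟨u, huT, hu⟩ := SetLike.not_le_iff_exists.1 hTx
  obtain ⟨q, hq, hle⟩ := exists_le_isAssociatedPrime_of_isNoetherianRing R
    (Submodule.mkQ (x • (⊤ : Submodule R M)) u) (by simpa using hu)
  have hpq : p ≤ q := fun a ha => hle <| by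
    have hau : a • u = 0 := (Submodule.mem_torsionBySet_iff _ _).1 huT ⟨a, ha⟩
    rw [Submodule.mem_colon_singleton, ← map_smul, hau, map_zero, Submodule.mem_bot]
  have hxq : x ∈ q := hle <| by
    rw [Submodule.mem_colon_singleton, ← map_smul]
    exact (Submodule.Quotient.mk_eq_zero _).2 (Submodule.smul_mem_pointwise_smul _ _ _ trivial)
  have hxp : x ∉ p := isSMulRegular_iff_forall_notMem_associatedPrimes.1 hreg p hp
  exact ⟨q, hq, hpq.lt_of_not_ge fun hqp => hxp (hqp hxq)⟩

end AssociatedPrimes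

section CohenMacaulay

variable {R : Type u} [CommRing R] [IsLocalRing R] [IsNoetherianRing R]

theorem HasDepthGE.le_coheight {n : ℕ} {M : Type u} [AddCommGroup M] [Module R M]
    [Module.Finite R M] (h : HasDepthGE R n M) (p : PrimeSpectrum R)
    (hp : p.asIdeal ∈ associatedPrimes R M) : (n : ℕ∞) ≤ Order.coheight p := by
  induction n generalizing M p with
  | zero => simp
  | succ n ih =>
    obtain ⟨_ | ⟨x, rs⟩, hlen, hmem, hreg⟩ := id h
    · simp at hlen
    have hx : IsSMulRegular M x := ((RingTheory.Sequence.isWeaklyRegular_cons_iff ..).1 hreg).1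
    obtain ⟨q, hq, hpq⟩ :=
      exists_gt_mem_associatedPrimes_quotSMulTop (hmem x List.mem_cons_self) hx hp
    let q' : PrimeSpectrum R := ⟨q, hq.1⟩
    calc ((n + 1 : ℕ) : ℕ∞) = n + 1 := Nat.cast_succ n
      _ ≤ Order.coheight q' + 1 := by gcongr; exact ih (h.quotSMulTop hx) q' hq
      _ ≤ Order.coheight p := Order.coheight_add_one_le hpq

theorem HasDepthGE.mem_minimalPrimes {d : ℕ} (hd : ringKrullDim R ≤ d) {M : Type u}
    [AddCommGroup M] [Module R M] [Module.Finite R M] (h : HasDepthGE R d M) {p : Ideal R}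
    (hp : p ∈ associatedPrimes R M) : p ∈ minimalPrimes R := by
  have hprime : p.IsPrime := hp.1
  obtain ⟨q, hq, hqp⟩ := Ideal.exists_minimalPrimes_le (bot_le : ⊥ ≤ p)
  rcases hqp.eq_or_lt with rfl | hlt
  · exact hq
  let p' : PrimeSpectrum R := ⟨p, hprime⟩
  let q' : PrimeSpectrum R := ⟨q, hq.1.1⟩
  have hle : (d : ℕ∞) + 1 ≤ d :=
    calc (d : ℕ∞) + 1 ≤ Order.coheight p' + 1 := by gcongr; exact h.le_coheight p' hp
      _ ≤ Order.coheight q' := Order.coheight_add_one_le hlt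
      _ ≤ d := WithBot.coe_le_coe.1 ((Order.coheight_le_krullDim q').trans hd)
  exact absurd (ENat.natCast_le_natCast.1 hle) d.not_succ_le_self

theorem HasDepthGE.isSMulRegular {d : ℕ} (hd : ringKrullDim R ≤ d) {M : Type u}
    [AddCommGroup M] [Module R M] [Module.Finite R M] (h : HasDepthGE R d M) {s : R}
    (hs : IsSMulRegular R s) : IsSMulRegular M s := by
  rw [isSMulRegular_iff_forall_notMem_associatedPrimes] at hs ⊢
  intro p hp
  refine hs p (Module.associatedPrimes.minimalPrimes_annihilator_subset_associatedPrimes R R ?_)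
  rw [Module.annihilator_eq_bot.2 inferInstance]
  exact h.mem_minimalPrimes hd hp

end CohenMacaulay

theorem isLocalRing_quotient {R : Type*} [CommRing R] [IsLocalRing R] {I : Ideal R} (hI : I ≠ ⊤) :
    IsLocalRing (R ⧸ I) :=
  have := Ideal.Quotient.nontrivial_iff.2 hI
  .of_surjective' _ Ideal.Quotient.mk_surjective

section QuotientByRegularElement

variable {R : Type u} [CommRing R] [IsLocalRing R] [IsNoetherianRing R]

theorem exists_eq_succ_and_ringKrullDim_quotient_le {s : R} (hs : s ∈ maximalIdeal R)
    (hreg : IsSMulRegular R s) {d : ℕ} (hd : ringKrullDim R ≤ d) :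
    ∃ d', d = d' + 1 ∧ ringKrullDim (R ⧸ Ideal.span {s}) ≤ d' := by
  have hlt : ringKrullDim (R ⧸ Ideal.span {s}) < d := by
    rwa [← ringKrullDim_quotient_span_singleton_succ_eq_ringKrullDim hreg hs,
      ENat.WithBot.add_one_le_natCast_iff] at hd
  have hloc := isLocalRing_quotient (Ideal.span_singleton_ne_top hs)
  cases d with
  | zero => exact absurd hlt ringKrullDim_nonneg_of_nontrivial.not_gt
  | succ d' => exact ⟨d', rfl, ENat.WithBot.lt_add_one_iff.1 (by simpa using hlt)⟩

theorem HasDepthGE.quotient_span_singleton {M : Type u} [AddCommGroup M] [Module R M]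
    [Module.Finite R M] {n : ℕ} (h : HasDepthGE R (n + 1) M) {s : R} (hs : IsSMulRegular M s)
    [IsLocalRing (R ⧸ Ideal.span {s})] : HasDepthGE (R ⧸ Ideal.span {s}) n (QuotSMulTop s M) :=
  have : IsLocalHom (algebraMap R (R ⧸ Ideal.span {s})) :=
    .of_surjective _ Ideal.Quotient.mk_surjective
  (h.quotSMulTop hs).of_isLocalHom _

end QuotientByRegularElement

theorem isWeaklyRegular_map_quotient_span_singleton {R : Type*} [CommRing R] {s : R} {rs : List R}
    (h : IsWeaklyRegular R (s :: rs)) :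
    IsWeaklyRegular (R ⧸ Ideal.span {s}) (rs.map (Ideal.Quotient.mk (Ideal.span {s}))) := by
  have e : QuotSMulTop s R ≃ₗ[R] R ⧸ Ideal.span {s} :=
    Submodule.quotEquivOfEq _ _ (by simp [← Submodule.ideal_span_singleton_smul])
  rw [RingTheory.Sequence.isWeaklyRegular_cons_iff, e.isWeaklyRegular_congr] at h
  exact (RingTheory.Sequence.isWeaklyRegular_map_algebraMap_iff _ _ rs).2 h.2

theorem HasDepthGE.isWeaklyRegular {d : ℕ} {R : Type u} [CommRing R] [IsLocalRing R]
    [IsNoetherianRing R] (hd : ringKrullDim R ≤ d) {M : Type u} [AddCommGroup M] [Module R M]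
    [Module.Finite R M] (h : HasDepthGE R d M) {rs : List R} (hmem : ∀ r ∈ rs, r ∈ maximalIdeal R)
    (hrs : IsWeaklyRegular R rs) : IsWeaklyRegular M rs := by
  induction hn : rs.length generalizing R M d with
  | zero => simp [List.length_eq_zero_iff.1 hn]
  | succ n ih =>
    obtain _ | ⟨s, rs⟩ := rs
    · exact .nil R M
    have hsm : s ∈ maximalIdeal R := hmem s List.mem_cons_self
    have hs : IsSMulRegular R s := ((RingTheory.Sequence.isWeaklyRegular_cons_iff ..).1 hrs).1
    have hsM : IsSMulRegular M s := h.isSMulRegular hd hs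
    obtain ⟨d, rfl, hd'⟩ := exists_eq_succ_and_ringKrullDim_quotient_le hsm hs hd
    have hloc := isLocalRing_quotient (Ideal.span_singleton_ne_top hsm)
    have hlocHom : IsLocalHom (Ideal.Quotient.mk (Ideal.span {s})) :=
      .of_surjective _ Ideal.Quotient.mk_surjective
    have hfin : Module.Finite (R ⧸ Ideal.span {s}) (QuotSMulTop s M) :=
      .of_restrictScalars_finite R _ _
    refine (RingTheory.Sequence.isWeaklyRegular_cons_iff' M s rs).2 ⟨hsM, ?_⟩
    refine ih hd' (h.quotient_span_singleton hsM) ?_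
      (isWeaklyRegular_map_quotient_span_singleton hrs) (by simpa using hn)
    simpa [mem_maximalIdeal] using fun r hr => hmem r (List.mem_cons_of_mem s hr)

section Reduction

variable {R : Type*} [CommRing R] {K F N X : Type*} [AddCommGroup K] [Module R K]
  [AddCommGroup F] [Module R F] [AddCommGroup N] [Module R N] [AddCommGroup X] [Module R X]
  {i : K →ₗ[R] F} {f : F →ₗ[R] N}

theorem isSMulRegular_of_flat [Module.Flat R F] {s : R} (hs : IsSMulRegular R s) :
    IsSMulRegular F s :=
  ((TensorProduct.rid R F).isSMulRegular_congr s).1 (hs.lTensor F)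

theorem quotSMulTop_map_injective (hi : Function.Injective i) (h : Function.Exact i f) {s : R}
    (hs : IsSMulRegular N s) : Function.Injective (QuotSMulTop.map s i) := by
  refine (LinearMap.exact_zero_iff_injective (QuotSMulTop s K) _).1 ?_
  simpa only [map_zero] using QuotSMulTop.map_first_exact_on_four_term_exact_of_isSMulRegular_last
    ((LinearMap.exact_zero_iff_injective K i).2 hi) h hs

theorem lTensor_quotient_span_singleton_injective_iff {s : R} :
    Function.Injective (i.lTensor (R ⧸ Ideal.span {s})) ↔
      Function.Injective (QuotSMulTop.map s i) := by
  rw [← (QuotSMulTop.equivQuotTensor s K).injective_comp,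
    ← (QuotSMulTop.equivQuotTensor s F).comp_injective]
  exact iff_of_eq <| congrArg _ <|
    (congrArg DFunLike.coe (QuotSMulTop.equivQuotTensor_naturality s i)).symm

theorem isSMulRegular_of_quotSMulTop_map_injective (h : Function.Exact i f)
    (hf : Function.Surjective f) {s : R} (hs : IsSMulRegular F s)
    (hmap : Function.Injective (QuotSMulTop.map s i)) : IsSMulRegular N s := by
  rw [isSMulRegular_iff_right_eq_zero_of_smul]
  intro y hy
  obtain ⟨x, rfl⟩ := hf y
  obtain ⟨w, hw⟩ := (h (s • x)).1 (by rw [map_smul, hy])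
  have hw0 : (Submodule.Quotient.mk w : QuotSMulTop s K) = 0 := by
    apply hmap
    rw [map_zero, QuotSMulTop.map_apply_mk, hw, Submodule.Quotient.mk_eq_zero]
    exact Submodule.smul_mem_pointwise_smul _ _ _ trivial
  obtain ⟨v, -, rfl⟩ := (Submodule.mem_smul_pointwise_iff_exists _ _ _).1
    ((Submodule.Quotient.mk_eq_zero _).1 hw0)
  exact (h x).2 ⟨v, hs ((map_smul i s v).symm.trans hw)⟩

theorem lTensor_injective_of_projective (hi : Function.Injective i) (h : Function.Exact i f)
    (hf : Function.Surjective f) [Module.Projective R N] :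
    Function.Injective (i.lTensor X) := by
  obtain ⟨l, hl⟩ := ((h.split_tfae hi hf).out 0 1).1 (Module.projective_lifting_property _ _ hf)
  refine Function.LeftInverse.injective (g := l.lTensor X) fun t => ?_
  rw [← LinearMap.lTensor_comp_apply, hl, LinearMap.lTensor_id_apply]

theorem baseChange_lTensor_injective_iff (S : Type*) [CommRing S] [Algebra R S] :
    Function.Injective ((i.lTensor X).baseChange S) ↔
      Function.Injective ((i.baseChange S).lTensor (S ⊗[R] X)) := by
  have hcomm : (i.baseChange S).lTensor (S ⊗[R] X) ∘ₗ
      (TensorProduct.AlgebraTensorModule.distribBaseChange R S X K).toLinearMap =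
      (TensorProduct.AlgebraTensorModule.distribBaseChange R S X F).toLinearMap ∘ₗ
        (i.lTensor X).baseChange S := by
    ext; simp
  rw [← (TensorProduct.AlgebraTensorModule.distribBaseChange R S X K).injective_comp,
    ← (TensorProduct.AlgebraTensorModule.distribBaseChange R S X F).comp_injective]
  exact iff_of_eq (congrArg _ (congrArg DFunLike.coe hcomm)).symm

end Reduction

section SocleElement

variable {R : Type*} [CommRing R] {r : R}

theorem mem_colon_smul_top_iff_of_free {F : Type*} [AddCommGroup F] [Module R F] [Module.Free R F]
    {y : F} : y ∈ (⊥ : Submodule R R).colon {r} • (⊤ : Submodule R F) ↔ r • y = 0 := by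
  constructor
  · intro hy
    induction hy using Submodule.smul_induction_on' with
    | smul a ha n _ =>
      have har : a * r = 0 := by simpa [Submodule.mem_colon_singleton] using ha
      rw [smul_smul, mul_comm, har, zero_smul]
    | add a _ b _ ha hb => rw [smul_add, ha, hb, add_zero]
  · intro hy
    let b := Module.Free.chooseBasis R F
    rw [← b.linearCombination_repr y, Finsupp.linearCombination_apply]
    refine Submodule.sum_mem _ fun j _ => Submodule.smul_mem_smul ?_ trivial
    have hj : r * b.repr y j = 0 := by simpa using DFunLike.congr_fun (congrArg b.repr hy) j
    simpa [Submodule.mem_colon_singleton, mul_comm] using hj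

theorem lTensor_quotient_colon_injective_of_free {K F : Type*} [AddCommGroup K] [Module R K]
    [Module.Free R K] [AddCommGroup F] [Module R F] [Module.Free R F] {i : K →ₗ[R] F}
    (hi : Function.Injective i) :
    Function.Injective (i.lTensor (R ⧸ (⊥ : Submodule R R).colon {r})) := by
  rw [injective_iff_map_eq_zero]
  intro x hx
  obtain ⟨y, rfl⟩ := TensorProduct.mk_surjective R K _ Ideal.Quotient.mk_surjective x
  rw [← LinearMap.mem_ker, LinearMap.ker_tensorProductMk, mem_colon_smul_top_iff_of_free]
  have hy : i y ∈ (⊥ : Submodule R R).colon {r} • (⊤ : Submodule R F) := by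
    rw [← LinearMap.ker_tensorProductMk]
    exact hx
  apply hi
  rw [map_smul, map_zero, mem_colon_smul_top_iff_of_free.1 hy]

end SocleElement

/-- `N` has a finite resolution by finite free modules. The resolution is not recorded as a complex:
it is built by splicing short exact sequences `0 → K → F → N → 0`. -/
inductive HasFiniteFreeResolution (R : Type u) [CommRing R] :
    ∀ (N : Type u) [AddCommGroup N] [Module R N], Prop
  | free (N : Type u) [AddCommGroup N] [Module R N] [Module.Free R N] [Module.Finite R N] :
    HasFiniteFreeResolution R N
  | step {K F N : Type u} [AddCommGroup K] [Module R K] [AddCommGroup F] [Module R F]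
      [AddCommGroup N] [Module R N] [Module.Free R F] [Module.Finite R F]
      {i : K →ₗ[R] F} {f : F →ₗ[R] N} (hi : Function.Injective i) (h : Function.Exact i f)
      (hf : Function.Surjective f) (hK : HasFiniteFreeResolution R K) :
    HasFiniteFreeResolution R N

namespace HasFiniteFreeResolution

variable {R : Type u} [CommRing R] {N : Type u} [AddCommGroup N] [Module R N]

theorem finite (h : HasFiniteFreeResolution R N) : Module.Finite R N := by
  induction h with
  | free => assumption
  | step _ _ hf => exact .of_surjective _ hf

theorem baseChange (S : Type u) [CommRing S] [Algebra R S] [Module.Flat R S]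
    (h : HasFiniteFreeResolution R N) : HasFiniteFreeResolution S (S ⊗[R] N) := by
  induction h with
  | free => exact free _
  | @step K F N _ _ _ _ _ _ _ _ i f hi h hf _ ih =>
    exact step (i := i.baseChange S) (f := f.baseChange S)
      (Module.Flat.lTensor_preserves_injective_linearMap i hi) (lTensor_exact S h hf)
      (LinearMap.lTensor_surjective S hf) ih

theorem quotient_span_singleton (h : HasFiniteFreeResolution R N) {s : R} (hs : IsSMulRegular R s)
    (hsN : IsSMulRegular N s) :
    HasFiniteFreeResolution (R ⧸ Ideal.span {s}) ((R ⧸ Ideal.span {s}) ⊗[R] N) := by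
  induction h with
  | free => exact free _
  | @step K F N _ _ _ _ _ _ _ _ i f hi h hf _ ih =>
    exact step (i := i.baseChange _) (f := f.baseChange _)
      (lTensor_quotient_span_singleton_injective_iff.2 (quotSMulTop_map_injective hi h hsN))
      (lTensor_exact _ h hf) (LinearMap.lTensor_surjective _ hf)
      (ih ((isSMulRegular_of_flat (F := F) hs).of_injective i hi))

theorem free_of_maximalIdeal_mem_associatedPrimes [IsLocalRing R] [IsNoetherianRing R]
    (hR : maximalIdeal R ∈ associatedPrimes R R) (h : HasFiniteFreeResolution R N) :
    Module.Free R N := by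
  obtain ⟨-, r, hr⟩ := isAssociatedPrime_iff.1 hR
  induction h with
  | free => assumption
  | @step K F N _ _ _ _ _ _ _ _ i f hi h hf hK ih =>
    have := hK.finite
    have hinj : Function.Injective (i.lTensor (R ⧸ maximalIdeal R)) := by
      rw [hr]
      exact lTensor_quotient_colon_injective_of_free hi
    exact Module.free_of_lTensor_residueField_injective i f hf h hinj

end HasFiniteFreeResolution

open Module in
theorem maximalIdeal_localization_mem_associatedPrimes {R : Type*} [CommRing R]
    {q : Ideal R} [q.IsPrime] (hq : q ∈ associatedPrimes R R) :
    maximalIdeal (Localization.AtPrime q) ∈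
      associatedPrimes (Localization.AtPrime q) (Localization.AtPrime q) := by
  apply associatedPrimes.mem_associatedPrimes_of_comap_mem_associatedPrimes_of_isLocalizedModule
    q.primeCompl (Algebra.linearMap R (Localization.AtPrime q))
  simpa [Localization.AtPrime.under_maximalIdeal] using hq

theorem exists_isSMulRegular_smul_eq_zero {R : Type*} [CommRing R] [IsNoetherianRing R]
    {T : Type*} [AddCommGroup T] [Module R T] [Module.Finite R T]
    (hT : ∀ q ∈ associatedPrimes R R, ∀ t : T, ∃ u ∉ q, u • t = 0) :
    ∃ s : R, IsSMulRegular R s ∧ ∀ t : T, s • t = 0 := by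
  have hann : ∀ q ∈ associatedPrimes R R, ¬ Module.annihilator R T ≤ q := fun q hq hle =>
    Module.notMem_support_iff'.2 (hT q hq)
      (Module.mem_support_iff_of_finite (p := ⟨q, hq.1⟩).2 hle)
  have havoid : ¬ (Module.annihilator R T : Set R) ⊆ ⋃ q ∈ associatedPrimes R R, (q : Set R) :=
    fun hsub =>
      let ⟨q, hq, hle⟩ := (Ideal.subset_union_prime_finite (associatedPrimes.finite R R) (f := id)
        ⊥ ⊥ fun q hq _ _ => hq.1).1 hsub
      hann q hq hle
  obtain ⟨s, hs, hs'⟩ := Set.not_subset.1 havoid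
  rw [biUnion_associatedPrimes_eq_compl_regular] at hs'
  exact ⟨s, not_not.1 hs', Module.mem_annihilator.1 hs⟩

namespace HasFiniteFreeResolution

variable {R : Type u} [CommRing R] [IsNoetherianRing R]
  {K F N X : Type u} [AddCommGroup K] [Module R K] [AddCommGroup F] [Module R F] [Module.Free R F]
  [Module.Finite R F] [AddCommGroup N] [Module R N] [AddCommGroup X] [Module R X]
  {i : K →ₗ[R] F} {f : F →ₗ[R] N}

theorem exists_notMem_smul_eq_zero (hi : Function.Injective i) (h : Function.Exact i f)
    (hf : Function.Surjective f) (hK : HasFiniteFreeResolution R K) {q : Ideal R}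
    (hq : q ∈ associatedPrimes R R) {t : X ⊗[R] K} (ht : i.lTensor X t = 0) :
    ∃ u ∉ q, u • t = 0 := by
  have := hq.1
  let A := Localization.AtPrime q
  have : IsNoetherianRing A := IsLocalization.isNoetherianRing q.primeCompl A inferInstance
  have hfree : Module.Free A (A ⊗[R] N) := ((step hi h hf hK).baseChange
    A).free_of_maximalIdeal_mem_associatedPrimes (maximalIdeal_localization_mem_associatedPrimes hq)
  have hinj : Function.Injective ((i.lTensor X).baseChange A) :=
    (baseChange_lTensor_injective_iff A).2 <| lTensor_injective_of_projective
      (f := f.baseChange A) (Module.Flat.lTensor_preserves_injective_linearMap i hi)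
      (lTensor_exact A h hf) (LinearMap.lTensor_surjective A hf)
  have hzero : TensorProduct.mk R A (X ⊗[R] K) 1 t = 0 := hinj (by simp [ht])
  obtain ⟨u, hu⟩ := (IsLocalizedModule.eq_zero_iff q.primeCompl _).1 hzero
  exact ⟨u, u.2, hu⟩

theorem exists_isSMulRegular_smul_ker_lTensor_eq_zero [Module.Finite R X]
    (hi : Function.Injective i) (h : Function.Exact i f) (hf : Function.Surjective f)
    (hK : HasFiniteFreeResolution R K) :
    ∃ s : R, IsSMulRegular R s ∧ ∀ t : X ⊗[R] K, i.lTensor X t = 0 → s • t = 0 := by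
  have := hK.finite
  obtain ⟨s, hs, hkill⟩ := exists_isSMulRegular_smul_eq_zero (R := R)
    (T := LinearMap.ker (i.lTensor X)) fun q hq t => by
      obtain ⟨u, hu, hut⟩ := exists_notMem_smul_eq_zero hi h hf hK hq t.2
      exact ⟨u, hu, Subtype.ext hut⟩
  exact ⟨s, hs, fun t ht => congrArg Subtype.val (hkill ⟨t, ht⟩)⟩

theorem injective_lTensor [IsLocalRing R] [Module.Finite R X] {d : ℕ} (hd : ringKrullDim R ≤ d)
    (hX : HasDepthGE R d X) (hi : Function.Injective i) (h : Function.Exact i f)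
    (hf : Function.Surjective f) (hK : HasFiniteFreeResolution R K) :
    Function.Injective (i.lTensor X) := by
  induction d using Nat.strong_induction_on generalizing R K F N X with
  | _ d ih =>
    obtain ⟨s, hs, hkill⟩ := exists_isSMulRegular_smul_ker_lTensor_eq_zero (X := X) hi h hf hK
    rw [injective_iff_map_eq_zero]
    intro t ht
    by_cases hunit : IsUnit s
    · exact hunit.smul_eq_zero.1 (hkill t ht)
    have hsX : IsSMulRegular X s := hX.isSMulRegular hd hs
    have hsK : IsSMulRegular K s := (isSMulRegular_of_flat (F := F) hs).of_injective i hi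
    suffices hreg : IsSMulRegular (X ⊗[R] K) s from hreg.right_eq_zero_of_smul (hkill t ht)
    cases hK with
    | free => exact hsX.rTensor K
    | @step K₂ F₂ _ _ _ _ _ _ _ _ _ i₂ f₂ hi₂ h₂ hf₂ hK₂ =>
      obtain ⟨d, rfl, hd'⟩ := exists_eq_succ_and_ringKrullDim_quotient_le hunit hs hd
      have hloc := isLocalRing_quotient (Ideal.span_singleton_ne_top hunit)
      let S := R ⧸ Ideal.span {s}
      have hXs : HasDepthGE S d (S ⊗[R] X) := (hX.quotient_span_singleton hsX).congr
        ((QuotSMulTop.equivQuotTensor s X).extendScalarsOfSurjective Ideal.Quotient.mk_surjective)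
      have hinj : Function.Injective ((i₂.baseChange S).lTensor (S ⊗[R] X)) :=
        ih d d.lt_succ_self hd' hXs (f := f₂.baseChange S)
          (lTensor_quotient_span_singleton_injective_iff.2 (quotSMulTop_map_injective hi₂ h₂ hsK))
          (lTensor_exact S h₂ hf₂) (LinearMap.lTensor_surjective S hf₂)
          (hK₂.quotient_span_singleton hs
            ((isSMulRegular_of_flat (F := F₂) hs).of_injective i₂ hi₂))
      exact isSMulRegular_of_quotSMulTop_map_injective (lTensor_exact X h₂ hf₂)
        (LinearMap.lTensor_surjective X hf₂) (hsX.rTensor F₂)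
        (lTensor_quotient_span_singleton_injective_iff.1
          ((baseChange_lTensor_injective_iff S).2 hinj))

end HasFiniteFreeResolution

section Splice

variable {C : Type*} [Category C] [Abelian C]

theorem quasiIso_toSingle₀Equiv_symm {P : ChainComplex C ℕ} {Z : C} (ε : P.X 0 ⟶ Z)
    (hε : Epi ε) (w : P.d 1 0 ≫ ε = 0) (h₀ : (ShortComplex.mk _ _ w).Exact)
    (hsucc : ∀ n, P.ExactAt (n + 1)) :
    QuasiIso ((ChainComplex.toSingle₀Equiv P Z).symm ⟨ε, w⟩) := by
  refine ⟨fun n => ?_⟩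
  cases n with
  | zero =>
    rw [ChainComplex.quasiIsoAt₀_iff, ShortComplex.quasiIso_iff_of_zeros' _
      (P.shape _ _ (by simp)) rfl rfl]
    refine (ShortComplex.exact_and_epi_g_iff_of_iso ?_).2 ⟨h₀, hε⟩
    refine ShortComplex.isoMk (Iso.refl _) (Iso.refl _) (Iso.refl _) ?_ ?_
    · exact (Category.id_comp _).trans (Category.comp_id _).symm
    · exact (Category.id_comp _).trans ((Category.comp_id _).trans
        (ChainComplex.toSingle₀Equiv_symm_apply_f_zero ε w)).symm
  | succ n =>
    rw [quasiIsoAt_iff_exactAt']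
    · exact hsucc n
    · exact ChainComplex.exactAt_succ_single_obj _ _

theorem exactAt_succ_augment {P : ChainComplex C ℕ} {X Y : C} {ε : P.X 0 ⟶ X}
    {w : P.d 1 0 ≫ ε = 0} (h₀ : (ShortComplex.mk _ _ w).Exact) (hsucc : ∀ n, P.ExactAt (n + 1))
    (f : X ⟶ Y) [Mono f] (w' : P.d 1 0 ≫ ε ≫ f = 0) (n : ℕ) :
    (P.augment (ε ≫ f) w').ExactAt (n + 1) := by
  rw [HomologicalComplex.exactAt_iff' _ (n + 2) (n + 1) n (by simp) (by simp)]
  cases n with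
  | zero =>
    exact (ShortComplex.exact_iff_of_epi_of_isIso_of_mono (S₁ := ShortComplex.mk _ _ w)
      (S₂ := ShortComplex.mk _ _ w') ⟨𝟙 _, 𝟙 _, f, by simp, by simp⟩).1 h₀
  | succ n => exact (P.exactAt_iff' (n + 2) (n + 1) n (by simp) (by simp)).1 (hsucc n)

/-- The projective resolution `⋯ → Q₁ → Q₀ → S.X₂ → S.X₃` obtained by splicing a resolution `Q` of
the kernel onto a short exact sequence with projective middle term. It realizes dimension shifting
on the level of complexes. -/
noncomputable def spliceProjectiveResolution {S : ShortComplex C} (hS : S.ShortExact)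
    [Projective S.X₂] (Q : ProjectiveResolution S.X₁) : ProjectiveResolution S.X₃ :=
  let ε := ChainComplex.toSingle₀Equiv _ _ Q.π
  have hε : (ShortComplex.mk _ _ ε.2).Exact := Q.exact₀
  have : Epi ε.1 := inferInstanceAs (Epi (Q.π.f 0))
  have w : Q.complex.d 1 0 ≫ ε.1 ≫ S.f = 0 := by
    rw [← Category.assoc, ε.2, Limits.zero_comp]
  have w' : (ε.1 ≫ S.f) ≫ S.g = 0 := by rw [Category.assoc, S.zero, Limits.comp_zero]
  have := hS.mono_f
  { complex := Q.complex.augment (ε.1 ≫ S.f) w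
    projective
      | 0 => ‹Projective S.X₂›
      | n + 1 => Q.projective n
    π := (ChainComplex.toSingle₀Equiv _ _).symm ⟨S.g, w'⟩
    quasiIso := quasiIso_toSingle₀Equiv_symm _ hS.epi_g _
      ((ShortComplex.exact_iff_of_epi_of_isIso_of_mono (S₁ := ShortComplex.mk _ _ w') (S₂ := S)
        ⟨ε.1, 𝟙 _, 𝟙 _, by simp, by simp⟩).2 hS.exact)
      (exactAt_succ_augment hε Q.complex_exactAt_succ S.f w) }

end Splice

namespace TorVanish

section

variable {R : Type} [CommRing R]

theorem isZero_iff {M N : Type} [AddCommGroup M] [Module R M] [AddCommGroup N] [Module R N]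
    {n : ℕ} : TorVanish R M N n ↔ Limits.IsZero
      (((Tor (ModuleCat R) n).obj (ModuleCat.of R M)).obj (ModuleCat.of R N)) :=
  (ModuleCat.isZero_iff_subsingleton).symm

variable (M : Type) [AddCommGroup M] [Module R M] {N : Type} [AddCommGroup N] [Module R N]

theorem iff_exactAt (P : ProjectiveResolution (ModuleCat.of R N)) (n : ℕ) :
    TorVanish R M N n ↔
      ((((MonoidalCategory.tensoringLeft _).obj (ModuleCat.of R M)).mapHomologicalComplex
        (ComplexShape.down ℕ)).obj P.complex).ExactAt n := by
  rw [isZero_iff, HomologicalComplex.exactAt_iff_isZero_homology]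
  exact (P.isoLeftDerivedObj
    ((MonoidalCategory.tensoringLeft (ModuleCat R)).obj (ModuleCat.of R M)) n).isZero_iff

theorem succ_iff_exact (P : ProjectiveResolution (ModuleCat.of R N)) (n : ℕ) :
    TorVanish R M N (n + 1) ↔ Function.Exact ((P.complex.d (n + 2) (n + 1)).hom.lTensor M)
      ((P.complex.d (n + 1) n).hom.lTensor M) := by
  rw [iff_exactAt M P, HomologicalComplex.exactAt_iff' _ (n + 2) (n + 1) n (by simp) (by simp),
    ShortComplex.ShortExact.moduleCat_exact_iff_function_exact]
  rfl

theorem of_flat_left [Module.Flat R M] (N : Type) [AddCommGroup N] [Module R N] (n : ℕ) :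
    TorVanish R M N (n + 1) := by
  let P := projectiveResolution (ModuleCat.of R N)
  exact (succ_iff_exact M P n).2 (Module.Flat.lTensor_exact M
    ((ShortComplex.ShortExact.moduleCat_exact_iff_function_exact _).1 (P.exact_succ n)))

theorem of_projective_right (N : Type) [AddCommGroup N] [Module R N] [Module.Projective R N]
    (n : ℕ) : TorVanish R M N (n + 1) := by
  have := (IsProjective.iff_projective N).1 ‹Module.Projective R N›
  exact isZero_iff.2 (isZero_Tor_succ_of_projective (ModuleCat R) _ _ n)

section Shift

variable {K F : Type} [AddCommGroup K] [Module R K] [AddCommGroup F] [Module R F]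
  [Module.Projective R F] {i : K →ₗ[R] F} {f : F →ₗ[R] N} (hi : Function.Injective i)
  (h : Function.Exact i f) (hf : Function.Surjective f)

include hi h hf

theorem add_two_iff_right (n : ℕ) : TorVanish R M N (n + 2) ↔ TorVanish R M K (n + 1) := by
  have hS := ModuleCat.shortComplex_shortExact
    (ModuleCat.shortComplexOfCompEqZero i f h.linearMap_comp_eq_zero) h hi hf
  have := (IsProjective.iff_projective F).1 ‹Module.Projective R F›
  let Q := projectiveResolution (ModuleCat.of R K)
  exact (succ_iff_exact M (spliceProjectiveResolution hS Q) (n + 1)).trans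
    (succ_iff_exact M Q n).symm

theorem one_iff_injective : TorVanish R M N 1 ↔ Function.Injective (i.lTensor M) := by
  have hS := ModuleCat.shortComplex_shortExact
    (ModuleCat.shortComplexOfCompEqZero i f h.linearMap_comp_eq_zero) h hi hf
  have := (IsProjective.iff_projective F).1 ‹Module.Projective R F›
  let Q := projectiveResolution (ModuleCat.of R K)
  let ε : Q.complex.X 0 →ₗ[R] K := (Q.π.f 0).hom
  have hε : Function.Surjective ε :=
    (ModuleCat.epi_iff_surjective (Q.π.f 0)).1 inferInstance
  have hex : Function.Exact ((Q.complex.d 1 0).hom.lTensor M) (ε.lTensor M) := lTensor_exact M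
    ((ShortComplex.ShortExact.moduleCat_exact_iff_function_exact _).1 Q.exact₀) hε
  have hsplice : TorVanish R M N 1 ↔
      Function.Exact ((Q.complex.d 1 0).hom.lTensor M) (i.lTensor M ∘ ε.lTensor M) := by
    rw [← LinearMap.coe_comp, ← LinearMap.lTensor_comp]
    exact succ_iff_exact M (spliceProjectiveResolution hS Q) 0
  rw [hsplice]
  refine ⟨fun he => ?_, fun hinj => hex.comp_injective _ hinj (map_zero _)⟩
  rw [injective_iff_map_eq_zero]
  intro x hx
  obtain ⟨y, rfl⟩ := LinearMap.lTensor_surjective M hε x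
  exact (hex y).2 ((he y).1 hx)

end Shift

end

section LeftVariable

variable {R : Type} [CommRing R] {A B C : Type} [AddCommGroup A] [Module R A] [AddCommGroup B]
  [Module R B] [AddCommGroup C] [Module R C] {N : Type} [AddCommGroup N] [Module R N] {n : ℕ}

theorem of_retract_left (r : Retract (ModuleCat.of R A) (ModuleCat.of R B))
    (h : TorVanish R B N n) : TorVanish R A N n := by
  have rTor := r.map (Tor (ModuleCat R) n ⋙ (evaluation _ _).obj (ModuleCat.of R N))
  exact isZero_iff.2 ((isZero_iff.1 h).of_mono rTor.i)

theorem congr_left (e : A ≃ₗ[R] B) (h : TorVanish R A N n) : TorVanish R B N n :=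
  h.of_retract_left (.ofIso e.symm.toModuleIso)

variable {u : A →ₗ[R] B} {v : B →ₗ[R] C}

/-- The short complex `A ⊗ P → B ⊗ P → C ⊗ P` of chain complexes, whose homology sequence is the
long exact sequence of Tor in the first variable when `P` is a projective resolution. -/
noncomputable def tensorShortComplex (huv : Function.Exact u v)
    (P : ChainComplex (ModuleCat.{0} R) ℕ) : ShortComplex (ChainComplex (ModuleCat.{0} R) ℕ) where
  X₁ := (((MonoidalCategory.tensoringLeft _).obj (ModuleCat.of R A)).mapHomologicalComplex _).obj P
  X₂ := (((MonoidalCategory.tensoringLeft _).obj (ModuleCat.of R B)).mapHomologicalComplex _).obj P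
  X₃ := (((MonoidalCategory.tensoringLeft _).obj (ModuleCat.of R C)).mapHomologicalComplex _).obj P
  f := (NatTrans.mapHomologicalComplex
    ((MonoidalCategory.tensoringLeft _).map (ModuleCat.ofHom u)) _).app P
  g := (NatTrans.mapHomologicalComplex
    ((MonoidalCategory.tensoringLeft _).map (ModuleCat.ofHom v)) _).app P
  zero := by
    rw [← NatTrans.comp_app, ← NatTrans.mapHomologicalComplex_comp, ← Functor.map_comp,
      ← ModuleCat.ofHom_comp, huv.linearMap_comp_eq_zero, ModuleCat.ofHom_zero, Functor.map_zero]
    rfl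

theorem shortExact_tensorShortComplex (hu : Function.Injective u) (huv : Function.Exact u v)
    (hv : Function.Surjective v) (P : ProjectiveResolution (ModuleCat.of R N)) :
    (tensorShortComplex huv P.complex).ShortExact := by
  refine HomologicalComplex.shortExact_of_degreewise_shortExact _ fun n => ?_
  have := (IsProjective.iff_projective (P.complex.X n)).2 (P.projective n)
  exact ModuleCat.shortComplex_shortExact _ (rTensor_exact (P.complex.X n) huv hv)
    (Module.Flat.rTensor_preserves_injective_linearMap (M := P.complex.X n) u hu)
    (LinearMap.rTensor_surjective (P.complex.X n) hv)

variable (hu : Function.Injective u) (huv : Function.Exact u v) (hv : Function.Surjective v)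

include hu huv hv

theorem left_of_exact (hB : TorVanish R B N n) (hC : TorVanish R C N (n + 1)) :
    TorVanish R A N n := by
  let P := projectiveResolution (ModuleCat.of R N)
  have hS := shortExact_tensorShortComplex hu huv hv P
  rw [iff_exactAt _ P, HomologicalComplex.exactAt_iff_isZero_homology] at hB hC ⊢
  exact (hS.homology_exact₁ (n + 1) n rfl).isZero_of_both_isZero hC hB

theorem right_of_exact (hA : TorVanish R A N n) (hB : TorVanish R B N (n + 1)) :
    TorVanish R C N (n + 1) := by
  let P := projectiveResolution (ModuleCat.of R N)
  have hS := shortExact_tensorShortComplex hu huv hv P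
  rw [iff_exactAt _ P, HomologicalComplex.exactAt_iff_isZero_homology] at hA hB ⊢
  exact (hS.homology_exact₃ (n + 1) n rfl).isZero_of_both_isZero hB hA

theorem add_two_iff_left [Module.Flat R B] (n : ℕ) :
    TorVanish R C N (n + 2) ↔ TorVanish R A N (n + 1) :=
  ⟨left_of_exact hu huv hv (of_flat_left B N n),
    fun h => right_of_exact hu huv hv h (of_flat_left B N (n + 1))⟩

end LeftVariable

theorem quotient_ofList_smul_top {R : Type} [CommRing R] {L N : Type} [AddCommGroup L] [Module R L]
    [AddCommGroup N] [Module R N] {rs : List R} (hrs : IsWeaklyRegular L rs) {b : ℕ}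
    (h : ∀ i, b ≤ i → i ≤ b + rs.length → TorVanish R L N i) :
    TorVanish R (L ⧸ (Ideal.ofList rs • ⊤ : Submodule R L)) N (b + rs.length) := by
  induction rs generalizing L b with
  | nil => exact congr_left (Submodule.quotEquivOfEqBot _ (by simp)).symm (h b le_rfl le_rfl)
  | cons r rs ih =>
    rw [RingTheory.Sequence.isWeaklyRegular_cons_iff] at hrs
    refine congr_left (Submodule.quotOfListConsSMulTopEquivQuotSMulTopInner L r rs).symm ?_
    rw [List.length_cons, ← add_assoc, add_right_comm] at h ⊢
    refine ih hrs.2 fun i hi hi' => ?_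
    obtain ⟨j, rfl⟩ := Nat.exists_eq_add_of_le' (Nat.one_le_of_lt hi)
    exact right_of_exact (u := LinearMap.lsmul R L r) hrs.1
      (LinearMap.exact_lsmul_mkQ_smul_top L r) (Submodule.mkQ_surjective _)
      (h j (by omega) (by omega)) (h (j + 1) (by omega) (by omega))

end TorVanish

namespace HasFiniteFreeResolution

variable {R : Type} [CommRing R] {N : Type} [AddCommGroup N] [Module R N]

theorem exists_bounded_projectiveResolution (h : HasFiniteFreeResolution R N) :
    ∃ (n : ℕ) (P : ProjectiveResolution (ModuleCat.of R N)),
      ∀ i, n ≤ i → Limits.IsZero (P.complex.X i) := by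
  induction h with
  | free N =>
    have := (IsProjective.iff_projective (R := R) N).1 inferInstance
    refine ⟨1, .self _, fun i hi => HomologicalComplex.isZero_single_obj_X _ _ _ _ (by omega)⟩
  | @step K F N _ _ _ _ _ _ _ _ i f hi h hf _ ih =>
    obtain ⟨n, Q, hQ⟩ := ih
    have hS := ModuleCat.shortComplex_shortExact
      (ModuleCat.shortComplexOfCompEqZero i f h.linearMap_comp_eq_zero) h hi hf
    have := (IsProjective.iff_projective (R := R) F).1 inferInstance
    refine ⟨n + 1, spliceProjectiveResolution hS Q, fun j hj => ?_⟩
    obtain ⟨j, rfl⟩ := Nat.exists_eq_add_of_le' (Nat.one_le_of_lt hj)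
    exact hQ j (Nat.le_of_succ_le_succ hj)

theorem projDimFinite (h : HasFiniteFreeResolution R N) : ProjDimFinite R N := by
  obtain ⟨n, P, hP⟩ := h.exists_bounded_projectiveResolution
  refine ⟨n, fun Y i hi => ?_⟩
  rw [ExtVanish, ← ModuleCat.isZero_iff_subsingleton, (P.isoExt i _).isZero_iff,
    ← HomologicalComplex.exactAt_iff_isZero_homology, HomologicalComplex.exactAt_iff]
  refine ShortComplex.exact_of_isZero_X₂ _ (ModuleCat.isZero_of_iff_subsingleton.2 ?_)
  exact ⟨fun x y => (hP i hi).eq_of_src x y⟩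

theorem torVanish [IsLocalRing R] [IsNoetherianRing R] {d : ℕ} (hd : ringKrullDim R ≤ d) {X : Type}
    [AddCommGroup X] [Module R X] [Module.Finite R X] (hX : HasDepthGE R d X)
    (hN : HasFiniteFreeResolution R N) (n : ℕ) : TorVanish R X N (n + 1) := by
  induction hN generalizing n with
  | free N => exact .of_projective_right X N n
  | step hi h hf hK ih =>
    cases n with
    | zero => exact (TorVanish.one_iff_injective X hi h hf).2 (hK.injective_lTensor hd hX hi h hf)
    | succ n => exact (TorVanish.add_two_iff_right X hi h hf n).2 (ih n)

end HasFiniteFreeResolution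

theorem TorVanish.hasFiniteFreeResolution {R : Type} [CommRing R] [IsLocalRing R]
    [IsNoetherianRing R] {N : Type} [AddCommGroup N] [Module R N] [Module.Finite R N] {n : ℕ}
    (h : TorVanish R (ResidueField R) N (n + 1)) : HasFiniteFreeResolution R N := by
  induction n generalizing N with
  | zero =>
    obtain ⟨m, f, hf⟩ := Module.Finite.exists_fin' R N
    have hinj := (one_iff_injective _ (Submodule.subtype_injective _)
      (LinearMap.exact_subtype_ker_map f) hf).1 h
    have := Module.free_of_lTensor_residueField_injective _ f hf
      (LinearMap.exact_subtype_ker_map f) hinj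
    exact .free N
  | succ n ih =>
    obtain ⟨m, f, hf⟩ := Module.Finite.exists_fin' R N
    have hexact := LinearMap.exact_subtype_ker_map f
    have hi := Submodule.subtype_injective (LinearMap.ker f)
    exact .step hi hexact hf (ih ((add_two_iff_right _ hi hexact hf n).1 h))

/-- `X` is an `n`-th syzygy of `M`: the kernel obtained after `n` steps of a (not necessarily
minimal) resolution of `M` by finite free modules. -/
inductive IsSyzygy (R : Type u) [CommRing R] (X : Type u) [AddCommGroup X] [Module R X] :
    ℕ → ∀ (M : Type u) [AddCommGroup M] [Module R M], Prop
  | zero : IsSyzygy R X 0 X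
  | succ {n : ℕ} {K F M : Type u} [AddCommGroup K] [Module R K] [AddCommGroup F] [Module R F]
      [AddCommGroup M] [Module R M] [Module.Free R F] [Module.Finite R F]
      {i : K →ₗ[R] F} {f : F →ₗ[R] M} (hi : Function.Injective i) (h : Function.Exact i f)
      (hf : Function.Surjective f) (hK : IsSyzygy R X n K) : IsSyzygy R X (n + 1) M

namespace IsSyzygy

theorem hasFiniteFreeResolution {R : Type u} [CommRing R] {X M : Type u} [AddCommGroup X]
    [Module R X] [AddCommGroup M] [Module R M] {n : ℕ} (h : IsSyzygy R X n M)
    (hX : HasFiniteFreeResolution R X) : HasFiniteFreeResolution R M := by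
  induction h with
  | zero => exact hX
  | succ hi h hf _ ih => exact .step hi h hf ih

theorem torVanish_iff {R : Type} [CommRing R] {X M : Type} [AddCommGroup X] [Module R X]
    [AddCommGroup M] [Module R M] {n : ℕ} (h : IsSyzygy R X n M) (N : Type) [AddCommGroup N]
    [Module R N] (j : ℕ) : TorVanish R M N (j + n + 1) ↔ TorVanish R X N (j + 1) := by
  induction h with
  | zero => rfl
  | succ hi h hf _ ih => exact (TorVanish.add_two_iff_left hi h hf _).trans ih

theorem exists_hasDepthGE {R : Type u} [CommRing R] [IsLocalRing R] [IsNoetherianRing R] {d : ℕ}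
    (hR : HasDepthGE R d R) {n : ℕ} {M : Type u} [AddCommGroup M] [Module R M] [Module.Finite R M]
    (hM : HasDepthGE R (d - n) M) :
    ∃ (X : Type u) (_ : AddCommGroup X) (_ : Module R X), Module.Finite R X ∧
      IsSyzygy R X n M ∧ HasDepthGE R d X := by
  induction n generalizing M with
  | zero => exact ⟨M, _, _, ‹_›, .zero, hM⟩
  | succ n ih =>
    obtain ⟨m, f, hf⟩ := Module.Finite.exists_fin' R M
    have hi := Submodule.subtype_injective (LinearMap.ker f)
    have h := LinearMap.exact_subtype_ker_map f
    have hK : HasDepthGE R (d - n) (LinearMap.ker f) := .ker (hR.mono (Nat.sub_le d n)) hf hM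
    obtain ⟨X, _, _, _, hX, hdepth⟩ := ih hK
    exact ⟨X, _, _, ‹_›, .succ hi h hf hX, hdepth⟩

end IsSyzygy

theorem ker_le_smul_top_of_lTensor_quotient_injective {R F X : Type*} [CommRing R]
    [AddCommGroup F] [Module R F] [AddCommGroup X] [Module R X] {I : Ideal R} {f : F →ₗ[R] X}
    (h : Function.Injective (f.lTensor (R ⧸ I))) : LinearMap.ker f ≤ I • ⊤ := by
  intro x hx
  rw [← LinearMap.ker_tensorProductMk, LinearMap.mem_ker]
  apply h
  rw [map_zero, TensorProduct.mk_apply, LinearMap.lTensor_tmul, LinearMap.mem_ker.1 hx,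
    TensorProduct.tmul_zero]

theorem exists_free_cover_ker_le_maximalIdeal_smul_top (R X : Type*) [CommRing R] [IsLocalRing R]
    [AddCommGroup X] [Module R X] [Module.Finite R X] :
    ∃ (m : ℕ) (f : (Fin m → R) →ₗ[R] X), Function.Surjective f ∧
      LinearMap.ker f ≤ maximalIdeal R • ⊤ := by
  let k := ResidueField R
  let b := Module.finBasis k (k ⊗[R] X)
  choose v hv using fun j => TensorProduct.mk_surjective R X k residue_surjective (b j)
  let e := Pi.basisFun R (Fin (Module.finrank k (k ⊗[R] X)))
  let f := e.constr R v
  have hf : f.baseChange k = ((e.baseChange k).equiv b (Equiv.refl _)).toLinearMap := by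
    refine (e.baseChange k).ext fun j => ?_
    rw [LinearEquiv.coe_coe, Module.Basis.equiv_apply, Module.Basis.baseChange_apply,
      LinearMap.baseChange_tmul, Module.Basis.constr_basis]
    exact hv j
  have hinj : Function.Injective (f.baseChange k) := hf ▸ LinearEquiv.injective _
  refine ⟨_, f, ?_, ker_le_smul_top_of_lTensor_quotient_injective hinj⟩
  rw [← LinearMap.range_eq_top, Module.Basis.constr_range]
  exact span_eq_top_of_tmul_eq_basis v b hv

theorem ideal_smul_top_ker_le_ofList_smul_top {R F X : Type*} [CommRing R] [AddCommGroup F]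
    [Module R F] [AddCommGroup X] [Module R X] {I : Ideal R} {rs : List R}
    (hI : I ^ 2 = Ideal.ofList rs * I) {f : F →ₗ[R] X} (hf : Function.Surjective f)
    (hker : LinearMap.ker f ≤ I • ⊤) (hX : IsWeaklyRegular X rs) :
    I • (⊤ : Submodule R (LinearMap.ker f)) ≤ Ideal.ofList rs • ⊤ := by
  have hzero : Function.Exact (0 : LinearMap.ker f →ₗ[R] LinearMap.ker f)
      (LinearMap.ker f).subtype :=
    (LinearMap.exact_zero_iff_injective _ _).2 (Submodule.subtype_injective _)
  have hexact :=
    RingTheory.Sequence.map_first_exact_on_four_term_right_exact_of_isSMulRegular_last hzero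
      (LinearMap.exact_subtype_ker_map f) hf hX
  rw [Submodule.smul_le]
  rintro a ha y -
  have hay : a • (y : F) ∈ Ideal.ofList rs • (⊤ : Submodule R F) := by
    have hmem := Submodule.smul_mem_smul ha (hker y.2)
    rw [← Submodule.mul_smul, ← pow_two, hI, Submodule.mul_smul] at hmem
    exact Submodule.smul_mono le_rfl le_top hmem
  rw [← Submodule.Quotient.mk_eq_zero]
  obtain ⟨z, hz⟩ := (hexact (Submodule.Quotient.mk (a • y))).1 <| by
    rwa [Submodule.mapQ_apply, Submodule.Quotient.mk_eq_zero]
  obtain ⟨z, rfl⟩ := Submodule.Quotient.mk_surjective _ z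
  rw [← hz, Submodule.mapQ_apply, LinearMap.zero_apply, Submodule.Quotient.mk_zero]

theorem nonempty_retract_residueField {R : Type u} [CommRing R] [IsLocalRing R] {V : Type u}
    [AddCommGroup V] [Module R V] [Nontrivial V]
    (hV : Module.IsTorsionBySet R V (maximalIdeal R : Set R)) :
    Nonempty (Retract (ModuleCat.of R (ResidueField R)) (ModuleCat.of R V)) := by
  let : Module (ResidueField R) V := hV.module
  have : IsScalarTower R (ResidueField R) V := hV.isScalarTower
  obtain ⟨v, hv⟩ := exists_ne (0 : V)
  let a := LinearMap.toSpanSingleton (ResidueField R) V v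
  obtain ⟨b, hb⟩ := a.exists_leftInverse_of_injective
    (LinearMap.ker_toSpanSingleton (ResidueField R) hv)
  exact ⟨⟨ModuleCat.ofHom (a.restrictScalars R), ModuleCat.ofHom (b.restrictScalars R),
    by ext x; exact LinearMap.congr_fun hb x⟩⟩

theorem free_or_hasFiniteFreeResolution {R : Type} [CommRing R] [IsLocalRing R]
    [IsNoetherianRing R] {d : ℕ} (hd : ringKrullDim R ≤ d) (hmin : HasMinimalMultiplicity R d)
    {X N : Type} [AddCommGroup X] [Module R X] [Module.Finite R X] [AddCommGroup N] [Module R N]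
    [Module.Finite R N] (hX : HasDepthGE R d X) {b : ℕ}
    (hvan : ∀ i, b + 2 ≤ i → i ≤ b + 2 + d → TorVanish R X N i) :
    Module.Free R X ∨ HasFiniteFreeResolution R N := by
  obtain ⟨rs, hlen, hmem, hreg, hsq⟩ := hmin
  obtain ⟨m, f, hf, hker⟩ := exists_free_cover_ker_le_maximalIdeal_smul_top R X
  let L := LinearMap.ker f
  rcases subsingleton_or_nontrivial L with hL | hL
  · have hinj : Function.Injective f :=
      LinearMap.ker_eq_bot.1 (Submodule.subsingleton_iff_eq_bot.1 hL)
    exact .inl (.of_equiv (LinearEquiv.ofBijective f ⟨hinj, hf⟩))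
  · right
    let V := L ⧸ (Ideal.ofList rs • ⊤ : Submodule R L)
    have : Nontrivial V := Submodule.Quotient.nontrivial_iff.2
      (Submodule.top_ne_ideal_smul_of_le_jacobson_annihilator
        ((Ideal.span_le.2 hmem).trans (maximalIdeal_le_jacobson _))).symm
    have hV : Module.IsTorsionBySet R V (maximalIdeal R : Set R) :=
      (Module.isTorsionBySet_quotient_iff _ _).2 fun x r hr =>
        ideal_smul_top_ker_le_ofList_smul_top hsq hf hker (hX.isWeaklyRegular hd hmem hreg)
          (Submodule.smul_mem_smul hr trivial)
    have hLreg : IsWeaklyRegular L rs :=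
      (HasDepthGE.ker ⟨rs, hlen, hmem, hreg⟩ hf (hX.mono d.pred_le)).isWeaklyRegular hd hmem hreg
    have hTor : TorVanish R V N (b + 1 + rs.length) :=
      .quotient_ofList_smul_top hLreg fun i hi hi' => by
        obtain ⟨j, rfl⟩ := Nat.exists_eq_add_of_le' (Nat.one_le_of_lt hi)
        exact (TorVanish.add_two_iff_left (Submodule.subtype_injective _)
          (LinearMap.exact_subtype_ker_map f) hf j).1 (hvan (j + 2) (by omega) (by omega))
    rw [add_right_comm] at hTor
    obtain ⟨r⟩ := nonempty_retract_residueField hV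
    exact (hTor.of_retract_left r).hasFiniteFreeResolution

theorem statement13 (R : Type) [CommRing R] [IsNoetherianRing R] [IsLocalRing R]
    (d : ℕ) (hdim : ringKrullDim R = (d : WithBot ℕ∞)) (hCM : depth R R = (d : ℕ∞))
    (hmin : HasMinimalMultiplicity R d)
    (M N : Type) [AddCommGroup M] [Module R M] [Module.Finite R M]
    [AddCommGroup N] [Module R N] [Module.Finite R N]
    (t : ℕ) (ht : depth R M = (t : ℕ∞))
    (a : ℕ) (ha : d - t + 2 ≤ a)
    (hvan : ∀ i : ℕ, a ≤ i → i ≤ a + d → TorVanish R M N i) :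
    (ProjDimFinite R M ∨ ProjDimFinite R N) ∧
    ∀ i : ℕ, d - t + 1 ≤ i → TorVanish R M N i := by
  have hM : HasDepthGE R (d - (d - t)) M := (HasDepthGE.of_le_depth ht.ge).mono (by omega)
  obtain ⟨X, _, _, _, hsyz, hX⟩ := IsSyzygy.exists_hasDepthGE (.of_le_depth hCM.ge) hM
  have hshift (j : ℕ) := hsyz.torVanish_iff N j
  obtain ⟨b, rfl⟩ := Nat.exists_eq_add_of_le ha
  have hvanX : ∀ i, b + 2 ≤ i → i ≤ b + 2 + d → TorVanish R X N i := fun i hi hi' => by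
    obtain ⟨j, rfl⟩ := Nat.exists_eq_add_of_le' (Nat.one_le_of_lt hi)
    exact (hshift j).1 (hvan _ (by omega) (by omega))
  have hTorM (hTorX : ∀ j, TorVanish R X N (j + 1)) (i : ℕ) (hi : d - t + 1 ≤ i) :
      TorVanish R M N i := by
    obtain ⟨j, rfl⟩ := Nat.exists_eq_add_of_le' hi
    exact (hshift j).2 (hTorX j)
  rcases free_or_hasFiniteFreeResolution hdim.le hmin hX hvanX with hfree | hN
  · exact ⟨.inl (hsyz.hasFiniteFreeResolution (.free X)).projDimFinite,
      hTorM (TorVanish.of_flat_left X N)⟩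
  · exact ⟨.inr hN.projDimFinite, hTorM (hN.torVanish hdim.le hX)⟩
end

section
/- Let (R, m, k) be a Cohen–Macaulay commutative Noetherian local ring of dimension d with minimal multiplicity, i.e., there exists an R-regular sequence x₁, …, x_d ∈ m with m² = (x₁, …, x_d)m. Let M be a finitely generated R-module with t = depth_R M. If Ext_R^i(M, M) = 0 for all 1 ≤ i ≤ d+1 and Ext_R^j(M, R) = 0 for all 1 ≤ j ≤ 2d − t + 2, then M is a free R-module. -/
open CategoryTheory IsLocalRing

/-! Let `𝐱` be the regular sequence and let `N` be a syzygy of `M` on which `𝐱` is regular. Let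
`U` be the kernel of a minimal cover of `N` by a free module `F`. Then `U / 𝐱U` embeds in `F /
𝐱F`, with image in `𝔪(F / 𝐱F)`, so it is killed by `𝔪` because `𝔪² ⊆ (𝐱)`. The vanishing of
`Ext(X, M)` and `Ext(X, R)` in the given range passes along syzygies and modulo `𝐱` to one group
`Ext(X, U / 𝐱U)`. If `U / 𝐱U` is zero, then `U = 0` by Nakayama, so `N` is free and `M` has finite
projective dimension. Otherwise `U / 𝐱U` is a nonzero vector space over the residue field, and it
is `X` that has finite projective dimension. For `X = M` both cases give `pd M < ∞`, and the
vanishing of `Ext(M, R)` then makes `M` projective.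
-/

open RingTheory.Sequence

universe w v u

section LongExactSequence

variable {C : Type u} [Category.{v} C] [Abelian C] [HasExt.{w} C]

lemma subsingleton_ext_of_iso_left {X X' : C} (e : X ≅ X') (Y : C) {i : ℕ}
    (h : Subsingleton (Abelian.Ext X Y i)) : Subsingleton (Abelian.Ext X' Y i) :=
  (((Abelian.extFunctor i).mapIso e.op).app Y).addCommGroupIsoToAddEquiv.subsingleton_congr.mpr h

lemma subsingleton_ext_of_iso_right (X : C) {Y Y' : C} (e : Y ≅ Y') {i : ℕ}
    (h : Subsingleton (Abelian.Ext X Y i)) : Subsingleton (Abelian.Ext X Y' i) :=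
  ((Abelian.extFunctorObj X i).mapIso e).addCommGroupIsoToAddEquiv.subsingleton_congr.mp h

variable {S : ShortComplex C} (hS : S.ShortExact)
include hS

lemma subsingleton_ext_X₁ (X : C) {i : ℕ}
    (h₃ : ∀ j, j + 1 = i → Subsingleton (Abelian.Ext X S.X₃ j))
    (h₂ : Subsingleton (Abelian.Ext X S.X₂ i)) : Subsingleton (Abelian.Ext X S.X₁ i) := by
  cases i with
  | zero =>
    have := hS.mono_f
    exact (Abelian.Ext.postcomp_mk₀_injective_of_mono X S.f).subsingleton
  | succ j =>
    have := h₃ j rfl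
    refine subsingleton_of_forall_eq 0 fun a => ?_
    obtain ⟨b, rfl⟩ := Abelian.Ext.covariant_sequence_exact₁ X hS a (Subsingleton.elim _ _) rfl
    rw [Subsingleton.elim b 0, Abelian.Ext.zero_comp]

lemma subsingleton_ext_X₃ (X : C) {i : ℕ} (h₂ : Subsingleton (Abelian.Ext X S.X₂ i))
    (h₁ : Subsingleton (Abelian.Ext X S.X₁ (i + 1))) : Subsingleton (Abelian.Ext X S.X₃ i) := by
  refine subsingleton_of_forall_eq 0 fun a => ?_
  obtain ⟨b, rfl⟩ := Abelian.Ext.covariant_sequence_exact₃ X hS a rfl (Subsingleton.elim _ _)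
  rw [Subsingleton.elim b 0, Abelian.Ext.zero_comp]

lemma subsingleton_ext_left_X₁ (Y : C) {i : ℕ} (h₂ : Subsingleton (Abelian.Ext S.X₂ Y i))
    (h₃ : Subsingleton (Abelian.Ext S.X₃ Y (i + 1))) : Subsingleton (Abelian.Ext S.X₁ Y i) := by
  refine subsingleton_of_forall_eq 0 fun a => ?_
  obtain ⟨b, rfl⟩ :=
    Abelian.Ext.contravariant_sequence_exact₁ hS Y a (add_comm 1 i) (Subsingleton.elim _ _)
  rw [Subsingleton.elim b 0, Abelian.Ext.comp_zero]

lemma exists_comp_eq_of_subsingleton_ext_one {Y : C} (h : Subsingleton (Abelian.Ext S.X₃ Y 1))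
    (a : S.X₁ ⟶ Y) : ∃ b : S.X₂ ⟶ Y, S.f ≫ b = a := by
  obtain ⟨β, hβ⟩ := Abelian.Ext.contravariant_sequence_exact₁ hS Y (Abelian.Ext.mk₀ a)
    (add_comm 1 0) (Subsingleton.elim _ _)
  obtain ⟨b, rfl⟩ := (Abelian.Ext.mk₀_bijective _ _).2 β
  rw [Abelian.Ext.mk₀_comp_mk₀] at hβ
  exact ⟨b, (Abelian.Ext.mk₀_bijective _ _).1 hβ⟩

end LongExactSequence

section ProjectiveDimension

variable {R : Type u} [CommRing R]

lemma subsingleton_ext_of_free {X : ModuleCat.{u} R} {i : ℕ}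
    (h : Subsingleton (Abelian.Ext X (ModuleCat.of R R) i))
    (F : Type u) [AddCommGroup F] [Module R F] [Module.Free R F] [Module.Finite R F] :
    Subsingleton (Abelian.Ext X (ModuleCat.of R F) i) := by
  refine subsingleton_of_forall_eq 0 fun a => ?_
  let b := Module.Free.chooseBasis R F
  have id_eq_sum : 𝟙 (ModuleCat.of R F) = ∑ j, (ModuleCat.ofHom (b.coord j) ≫
      ModuleCat.ofHom (LinearMap.toSpanSingleton R F (b j))) := by
    ext x
    simp [ModuleCat.hom_sum, b.sum_repr]
  rw [← a.comp_mk₀_id, id_eq_sum, Abelian.Ext.mk₀_sum, Abelian.Ext.comp_sum]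
  refine Finset.sum_eq_zero fun j _ => ?_
  rw [← Abelian.Ext.mk₀_comp_mk₀, ← Abelian.Ext.comp_assoc_of_second_deg_zero,
    Subsingleton.elim (a.comp (Abelian.Ext.mk₀ (ModuleCat.ofHom (b.coord j))) (add_zero i)) 0,
    Abelian.Ext.zero_comp]

lemma subsingleton_ext_ker {X : ModuleCat.{u} R} {F N : Type u} [AddCommGroup F] [Module R F]
    [Module.Free R F] [Module.Finite R F] [AddCommGroup N] [Module R N] {f : F →ₗ[R] N}
    (hf : Function.Surjective f) {i : ℕ}
    (hN : ∀ j, j + 1 = i → Subsingleton (Abelian.Ext X (ModuleCat.of R N) j))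
    (hR : Subsingleton (Abelian.Ext X (ModuleCat.of R R) i)) :
    Subsingleton (Abelian.Ext X (ModuleCat.of R (LinearMap.ker f)) i) :=
  subsingleton_ext_X₁ (LinearMap.shortExact_shortComplexKer hf) X hN (subsingleton_ext_of_free hR F)

lemma projective_of_surjective_of_subsingleton_ker {F N : Type u} [AddCommGroup F] [Module R F]
    [Module.Projective R F] [AddCommGroup N] [Module R N] {f : F →ₗ[R] N}
    (hf : Function.Surjective f) (hker : Subsingleton (LinearMap.ker f)) :
    Projective (ModuleCat.of R N) :=
  have f_injective : Function.Injective f :=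
    LinearMap.ker_eq_bot.1 (Submodule.subsingleton_iff_eq_bot.1 hker)
  (IsProjective.iff_projective N).1
    (Module.Projective.of_equiv (LinearEquiv.ofBijective f ⟨f_injective, hf⟩))

variable [IsNoetherianRing R] {X : ModuleCat.{u} R} [Module.Finite R X] {n : ℕ}

-- `Ext^n(X, -)` is right exact as `Ext^(n+1)(X, -)` vanishes, and it vanishes on free modules.
lemma hasProjectiveDimensionLT_of_subsingleton_ext_self (hpd : HasProjectiveDimensionLT X (n + 1))
    (h : Subsingleton (Abelian.Ext X (ModuleCat.of R R) n)) : HasProjectiveDimensionLT X n := by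
  refine ModuleCat.hasProjectiveDimensionLT_of_forall_finite X n fun L _ => ?_
  obtain ⟨F, _, _, _, _, f, hf⟩ := Module.exists_finite_presentation R L
  exact subsingleton_ext_X₃ (LinearMap.shortExact_shortComplexKer hf) X
    (subsingleton_ext_of_free h F) (HasProjectiveDimensionLT.subsingleton X (n + 1) _ le_rfl _)

lemma projective_of_subsingleton_ext_self (hpd : HasProjectiveDimensionLT X (n + 1))
    (h : ∀ i, 1 ≤ i → i ≤ n → Subsingleton (Abelian.Ext X (ModuleCat.of R R) i)) :
    Projective X := by
  induction n with
  | zero => exact projective_iff_hasProjectiveDimensionLT_one.2 hpd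
  | succ n ih =>
    exact ih (hasProjectiveDimensionLT_of_subsingleton_ext_self hpd (h _ (by omega) le_rfl))
      fun i h1 hn => h i h1 (by omega)

end ProjectiveDimension

section MinimalCover

variable {R : Type u} [CommRing R] [IsLocalRing R]

lemma exists_surjective_ker_le_maximalIdeal_smul_top
    (M : Type v) [AddCommGroup M] [Module R M] [Module.Finite R M] :
    ∃ (n : ℕ) (f : (Fin n → R) →ₗ[R] M), Function.Surjective f ∧
      LinearMap.ker f ≤ maximalIdeal R • ⊤ := by
  let b := Module.finBasis (ResidueField R) (TensorProduct R (ResidueField R) M)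
  choose v hv using fun j =>
    TensorProduct.mk_surjective R M (ResidueField R) Ideal.Quotient.mk_surjective (b j)
  refine ⟨_, Fintype.linearCombination R v, ?_, fun r hr => ?_⟩
  · rw [← LinearMap.range_eq_top, Fintype.range_linearCombination]
    exact span_eq_top_of_tmul_eq_basis v b hv
  · have residue_relation : ∑ j, residue R (r j) • b j = 0 := by
      have relation : ∑ j, r j • v j = 0 := by
        simpa only [LinearMap.mem_ker, Fintype.linearCombination_apply] using hr
      have tmul_relation := congrArg (TensorProduct.mk R (ResidueField R) M 1) relation
      simpa only [map_sum, map_smul, map_zero, hv, ← algebraMap_smul (ResidueField R) (r _),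
        ResidueField.algebraMap_eq, TensorProduct.mk_apply] using tmul_relation
    have r_mem (j) : r j ∈ maximalIdeal R :=
      (residue_eq_zero_iff _).1 (Fintype.linearIndependent_iff.1 b.linearIndependent _
        residue_relation j)
    rw [pi_eq_sum_univ' r]
    exact Submodule.sum_mem _ fun j _ => Submodule.smul_mem_smul (r_mem j) trivial

end MinimalCover

section Annihilated

variable {R : Type u} [CommRing R] [IsLocalRing R] [IsNoetherianRing R]

lemma subsingleton_of_subsingleton_linearMap (K : Type v) (W : Type w) [AddCommGroup K]
    [Module R K] [Module.Finite R K] [AddCommGroup W] [Module R W] [Module.Finite R W]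
    [Nontrivial W] (hW : maximalIdeal R ≤ Module.annihilator R W)
    (h : Subsingleton (K →ₗ[R] W)) : Subsingleton K := by
  obtain ⟨r, r_mem, r_regular⟩ := IsSMulRegular.subsingleton_linearMap_iff.mp h
  have r_isUnit : IsUnit r := by
    by_contra r_not_unit
    obtain ⟨x, hx⟩ := exists_ne (0 : W)
    exact hx (r_regular (by
      simpa using Module.mem_annihilator.1 (hW ((mem_maximalIdeal r).2 r_not_unit)) x))
  exact Module.annihilator_eq_top_iff.1 (Ideal.eq_top_of_isUnit_mem _ r_mem r_isUnit)

variable {W : Type u} [AddCommGroup W] [Module R W] [Module.Finite R W] [Nontrivial W]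

lemma projective_of_subsingleton_ext_one (hW : maximalIdeal R ≤ Module.annihilator R W)
    (X : ModuleCat.{u} R) [Module.Finite R X]
    (h : Subsingleton (Abelian.Ext X (ModuleCat.of R W) 1)) : Projective X := by
  obtain ⟨n, f, hf, ker_le⟩ := exists_surjective_ker_le_maximalIdeal_smul_top (R := R) X
  have linearMap_ker_eq_zero (a : LinearMap.ker f →ₗ[R] W) : a = 0 := by
    obtain ⟨b, hb⟩ := exists_comp_eq_of_subsingleton_ext_one
      (LinearMap.shortExact_shortComplexKer hf) h (ModuleCat.ofHom a)
    have maximalIdeal_smul_le : maximalIdeal R • (⊤ : Submodule R (Fin n → R)) ≤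
        LinearMap.ker b.hom := by
      refine Submodule.smul_le.2 fun r hr x _ => ?_
      rw [LinearMap.mem_ker, map_smul, Module.mem_annihilator.1 (hW hr)]
    ext x
    rw [show a x = b.hom x.1 from (congrArg (fun g => g.hom x) hb).symm]
    exact maximalIdeal_smul_le (ker_le x.2)
  have ker_subsingleton : Subsingleton (LinearMap.ker f) :=
    subsingleton_of_subsingleton_linearMap _ W hW
      (subsingleton_of_forall_eq 0 linearMap_ker_eq_zero)
  exact projective_of_surjective_of_subsingleton_ker hf ker_subsingleton

lemma hasProjectiveDimensionLT_of_subsingleton_ext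
    (hW : maximalIdeal R ≤ Module.annihilator R W) {n : ℕ} (X : ModuleCat.{u} R)
    [Module.Finite R X] (h : Subsingleton (Abelian.Ext X (ModuleCat.of R W) (n + 1))) :
    HasProjectiveDimensionLT X (n + 1) := by
  induction n generalizing X with
  | zero =>
    exact projective_iff_hasProjectiveDimensionLT_one.1 (projective_of_subsingleton_ext_one hW X h)
  | succ n ih =>
    obtain ⟨F, _, _, _, _, f, hf⟩ := Module.exists_finite_presentation R X
    have hS := LinearMap.shortExact_shortComplexKer hf
    have F_projective : Projective (ModuleCat.of R F) :=
      (IsProjective.iff_projective F).1 inferInstance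
    exact (hS.hasProjectiveDimensionLT_X₃_iff n F_projective).2
      (ih _ (subsingleton_ext_left_X₁ hS _
        (Abelian.Ext.subsingleton_of_projective (ModuleCat.of R F) _ n) h))

end Annihilated

section RegularSequence

variable {R : Type u} [CommRing R]

lemma subsingleton_ext_quotSMulTop {X : ModuleCat.{u} R} {N : Type u} [AddCommGroup N]
    [Module R N] {y : R} (hy : IsSMulRegular N y) {i : ℕ}
    (h : Subsingleton (Abelian.Ext X (ModuleCat.of R N) i))
    (h' : Subsingleton (Abelian.Ext X (ModuleCat.of R N) (i + 1))) :
    Subsingleton (Abelian.Ext X (ModuleCat.of R (QuotSMulTop y N)) i) :=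
  have hy' : IsSMulRegular (ModuleCat.of R N) y := hy
  subsingleton_ext_X₃ hy'.smulShortComplex_shortExact X h h'

lemma subsingleton_ext_quotient_ofList_smul_top {X : ModuleCat.{u} R} {ys : List R} {N : Type u}
    [AddCommGroup N] [Module R N] (hN : IsWeaklyRegular N ys) {a : ℕ}
    (h : ∀ i, a ≤ i → i ≤ a + ys.length → Subsingleton (Abelian.Ext X (ModuleCat.of R N) i)) :
    Subsingleton (Abelian.Ext X
      (ModuleCat.of R (N ⧸ Ideal.ofList ys • (⊤ : Submodule R N))) a) := by
  induction ys generalizing N with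
  | nil =>
    exact subsingleton_ext_of_iso_right X
      (Submodule.quotEquivOfEqBot _ (by simp)).symm.toModuleIso (h a le_rfl (by simp))
  | cons y ys ih =>
    obtain ⟨y_regular, ys_regular⟩ := (isWeaklyRegular_cons_iff N y ys).1 hN
    rw [List.length_cons] at h
    refine subsingleton_ext_of_iso_right X
      (Submodule.quotOfListConsSMulTopEquivQuotSMulTopInner N y ys).symm.toModuleIso
      (ih ys_regular fun i hai hi => ?_)
    exact subsingleton_ext_quotSMulTop y_regular (h i hai (by omega))
      (h (i + 1) (by omega) (by omega))

variable [IsNoetherianRing R] [IsLocalRing R] {N : Type u} [AddCommGroup N] [Module R N]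
  [Module.Finite R N] {A : Type u} [AddCommGroup A] [Module R A] [Module.Finite R A]

open Pointwise in
lemma subsingleton_ext_of_quotSMulTop {y : R} (hy : y ∈ maximalIdeal R) (hA : IsSMulRegular A y)
    {i : ℕ} (h : Subsingleton
      (Abelian.Ext (ModuleCat.of R (QuotSMulTop y A)) (ModuleCat.of R N) (i + 1))) :
    Subsingleton (Abelian.Ext (ModuleCat.of R A) (ModuleCat.of R N) i) := by
  have hA' : IsSMulRegular (ModuleCat.of R A) y := hA
  have mk₀_smul_id_comp (z : Abelian.Ext (ModuleCat.of R A) (ModuleCat.of R N) i) :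
      (Abelian.Ext.mk₀ (y • 𝟙 (ModuleCat.of R A))).comp z (zero_add i) = y • z := by
    rw [Abelian.Ext.mk₀_smul, Abelian.Ext.smul_comp, Abelian.Ext.mk₀_id_comp]
  have smul_surjective (x : Abelian.Ext (ModuleCat.of R A) (ModuleCat.of R N) i) :
      ∃ z, y • z = x := by
    obtain ⟨z, hz⟩ := Abelian.Ext.contravariant_sequence_exact₁ hA'.smulShortComplex_shortExact
      (ModuleCat.of R N) x (add_comm 1 i) (Subsingleton.elim (h := h) _ _)
    exact ⟨z, (mk₀_smul_id_comp z).symm.trans hz⟩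
  by_contra ext_nontrivial
  rw [not_subsingleton_iff_nontrivial] at ext_nontrivial
  refine Submodule.top_ne_pointwise_smul_of_mem_jacobson_annihilator
    (maximalIdeal_le_jacobson (Module.annihilator R
      (Abelian.Ext (ModuleCat.of R A) (ModuleCat.of R N) i)) hy)
    (eq_top_iff.2 fun x _ => ?_).symm
  obtain ⟨z, rfl⟩ := smul_surjective x
  exact Submodule.smul_mem_pointwise_smul _ _ ⊤ trivial

lemma subsingleton_ext_of_quotient_ofList_smul_top {ys : List R}
    (hys : ∀ y ∈ ys, y ∈ maximalIdeal R) (hA : IsWeaklyRegular A ys) {i : ℕ}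
    (h : Subsingleton (Abelian.Ext
      (ModuleCat.of R (A ⧸ Ideal.ofList ys • (⊤ : Submodule R A)))
      (ModuleCat.of R N) (i + ys.length))) :
    Subsingleton (Abelian.Ext (ModuleCat.of R A) (ModuleCat.of R N) i) := by
  induction ys generalizing A i with
  | nil =>
    exact subsingleton_ext_of_iso_left (Submodule.quotEquivOfEqBot _ (by simp)).toModuleIso _ h
  | cons y ys ih =>
    obtain ⟨y_regular, ys_regular⟩ := (isWeaklyRegular_cons_iff A y ys).1 hA
    obtain ⟨hy, hys⟩ := List.forall_mem_cons.1 hys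
    refine subsingleton_ext_of_quotSMulTop hy y_regular (ih hys ys_regular ?_)
    rw [List.length_cons, add_comm ys.length, ← add_assoc] at h
    exact subsingleton_ext_of_iso_left
      (Submodule.quotOfListConsSMulTopEquivQuotSMulTopInner A y ys).toModuleIso _ h

omit [IsLocalRing R] in
lemma isSMulRegular_of_subsingleton_linearMap_quotSMulTop
    (hsupp : Module.support R N ⊆ Module.support R A) {y : R}
    (h : Subsingleton (QuotSMulTop y A →ₗ[R] N)) : IsSMulRegular N y := by
  obtain ⟨r, r_mem, r_regular⟩ := IsSMulRegular.subsingleton_linearMap_iff.mp h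
  have not_regular_iff (a : R) : (∃ p ∈ associatedPrimes R N, a ∈ p) ↔ ¬ IsSMulRegular N a := by
    simpa only [Set.mem_iUnion, exists_prop, SetLike.mem_coe, Set.mem_compl_iff,
      Set.mem_ofPred_eq] using
      Set.ext_iff.1 (biUnion_associatedPrimes_eq_compl_regular R N) a
  by_contra y_not_regular
  obtain ⟨p, p_associated, y_mem_p⟩ := (not_regular_iff y).2 y_not_regular
  let q : PrimeSpectrum R := ⟨p, p_associated.isPrime⟩
  have q_mem_support : q ∈ Module.support R N := by
    obtain ⟨x, hx⟩ := (isAssociatedPrime_iff.1 p_associated).2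
    refine Module.mem_support_iff'.2 ⟨x, fun a a_notMem hax => a_notMem ?_⟩
    change a ∈ p
    rwa [hx, Submodule.mem_colon_singleton, Submodule.mem_bot]
  have q_mem_support_quotient : q ∈ Module.support R (QuotSMulTop y A) := by
    rw [Module.support_quotSMulTop]
    exact ⟨hsupp q_mem_support, Set.singleton_subset_iff.2 y_mem_p⟩
  exact (not_regular_iff r).1
    ⟨p, p_associated, Module.annihilator_le_of_mem_support q_mem_support_quotient r_mem⟩ r_regular

lemma isWeaklyRegular_of_subsingleton_ext
    (hsupp : Module.support R N ⊆ Module.support R A) {ys : List R}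
    (hys : ∀ y ∈ ys, y ∈ maximalIdeal R) (hA : IsWeaklyRegular A ys)
    (h : ∀ i < ys.length, Subsingleton (Abelian.Ext
      (ModuleCat.of R (A ⧸ Ideal.ofList ys • (⊤ : Submodule R A))) (ModuleCat.of R N) i)) :
    IsWeaklyRegular N ys := by
  induction ys generalizing A N with
  | nil => exact IsWeaklyRegular.nil R N
  | cons y ys ih =>
    have ys_regular := ((isWeaklyRegular_cons_iff A y ys).1 hA).2
    have hys := (List.forall_mem_cons.1 hys).2
    have ext_quotient (i : ℕ) (hi : i ≤ ys.length) : Subsingleton (Abelian.Ext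
        (ModuleCat.of R (QuotSMulTop y A ⧸ Ideal.ofList ys • (⊤ : Submodule R (QuotSMulTop y A))))
        (ModuleCat.of R N) i) :=
      subsingleton_ext_of_iso_left
        (Submodule.quotOfListConsSMulTopEquivQuotSMulTopInner A y ys).toModuleIso _
        (h i (Nat.lt_succ_of_le hi))
    have ext_zero : Subsingleton
        (Abelian.Ext (ModuleCat.of R (QuotSMulTop y A)) (ModuleCat.of R N) 0) :=
      subsingleton_ext_of_quotient_ofList_smul_top hys ys_regular
        (ext_quotient _ (zero_add ys.length).le)
    have hom_zero : Subsingleton (QuotSMulTop y A →ₗ[R] N) :=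
      (Abelian.Ext.addEquiv₀.toEquiv.trans ModuleCat.homEquiv).subsingleton_congr.1 ext_zero
    have y_regular_on_N := isSMulRegular_of_subsingleton_linearMap_quotSMulTop hsupp hom_zero
    refine .cons y_regular_on_N (ih ?_ hys ys_regular fun i hi => ?_)
    · rw [Module.support_quotSMulTop, Module.support_quotSMulTop]
      exact Set.inter_subset_inter_left _ hsupp
    · exact subsingleton_ext_quotSMulTop y_regular_on_N (ext_quotient i hi.le)
        (ext_quotient (i + 1) hi)

end RegularSequence

section Dichotomy

variable {R : Type u} [CommRing R] [IsLocalRing R] {xs : List R}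

lemma maximalIdeal_le_annihilator_ker_quotient (hsq : maximalIdeal R ^ 2 ≤ Ideal.ofList xs)
    {F : Type v} {N : Type w} [AddCommGroup F] [Module R F] [AddCommGroup N] [Module R N]
    {f : F →ₗ[R] N} (hf : Function.Surjective f)
    (ker_le : LinearMap.ker f ≤ maximalIdeal R • ⊤) (hN : IsWeaklyRegular N xs) :
    maximalIdeal R ≤ Module.annihilator R
      (LinearMap.ker f ⧸ Ideal.ofList xs • (⊤ : Submodule R (LinearMap.ker f))) := by
  have mapQ_injective : Function.Injective (Submodule.mapQ
      (Ideal.ofList xs • (⊤ : Submodule R (LinearMap.ker f)))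
      (Ideal.ofList xs • (⊤ : Submodule R F)) (LinearMap.ker f).subtype
      (Submodule.smul_top_le_comap_smul_top _ _)) := by
    have subtype_exact : Function.Exact (0 : PUnit →ₗ[R] LinearMap.ker f)
        (LinearMap.ker f).subtype :=
      (LinearMap.exact_zero_iff_injective _ _).2 (Submodule.subtype_injective _)
    have mapQ_exact := map_first_exact_on_four_term_right_exact_of_isSMulRegular_last
      subtype_exact (LinearMap.exact_subtype_ker_map f) hf hN
    rwa [Submodule.mapQ_zero, LinearMap.exact_zero_iff_injective] at mapQ_exact
  intro r hr
  refine Module.mem_annihilator.2 fun w => ?_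
  obtain ⟨u, rfl⟩ := Submodule.Quotient.mk_surjective _ w
  refine (injective_iff_map_eq_zero _).1 mapQ_injective _ ?_
  have smul_mem : r • (u : F) ∈ maximalIdeal R ^ 2 • (⊤ : Submodule R F) := by
    rw [pow_two, Submodule.mul_smul]
    exact Submodule.smul_mem_smul hr (ker_le u.2)
  exact (Submodule.Quotient.mk_eq_zero _).2 (Submodule.smul_mono_left hsq smul_mem)

variable [IsNoetherianRing R]

lemma subsingleton_ext_of_isRegular (hxs : maximalIdeal R ≤ (Ideal.ofList xs).radical)
    {N : ModuleCat.{u} R} [Module.Finite R N] [Nontrivial N] {rs : List R}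
    (hrs : ∀ r ∈ rs, r ∈ maximalIdeal R) (hN : IsRegular N rs) :
    ∀ i < rs.length, Subsingleton (Abelian.Ext
      (ModuleCat.of R (R ⧸ Ideal.ofList xs • (⊤ : Submodule R R))) N i) := by
  refine ModuleCat.subsingleton_ext_of_exists_isRegular (maximalIdeal R) _ ?_ N ?_ rs hrs hN
  · have annihilator_eq : Module.annihilator R (R ⧸ Ideal.ofList xs • (⊤ : Submodule R R)) =
        Ideal.ofList xs :=
      Ideal.annihilator_quotient.trans ((Ideal.smul_eq_mul _ _).trans (Ideal.mul_top _))
    rwa [Module.support_eq_zeroLocus, PrimeSpectrum.zeroLocus_subset_zeroLocus_iff,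
      annihilator_eq]
  · exact lt_top_iff_ne_top.2 (Submodule.top_ne_ideal_smul_of_le_jacobson_annihilator
      (maximalIdeal_le_jacobson _)).symm

variable (hxs : ∀ x ∈ xs, x ∈ maximalIdeal R) (hreg : IsWeaklyRegular R xs)
include hxs hreg

lemma isWeaklyRegular_of_subsingleton_ext_quotient_ofList {N : Type u} [AddCommGroup N]
    [Module R N] [Module.Finite R N] (h : ∀ i < xs.length, Subsingleton (Abelian.Ext
      (ModuleCat.of R (R ⧸ Ideal.ofList xs • (⊤ : Submodule R R))) (ModuleCat.of R N) i)) :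
    IsWeaklyRegular N xs := by
  have support_self : Module.support R R = Set.univ := by
    simp [Module.support_eq_zeroLocus, Module.annihilator_eq_bot.2]
  exact isWeaklyRegular_of_subsingleton_ext ((Set.subset_univ _).trans_eq support_self.symm)
    hxs hreg h

variable (hsq : maximalIdeal R ^ 2 ≤ Ideal.ofList xs)
include hsq

lemma subsingleton_ext_quotient_ofList_self : ∀ i < xs.length, Subsingleton (Abelian.Ext
    (ModuleCat.of R (R ⧸ Ideal.ofList xs • (⊤ : Submodule R R))) (ModuleCat.of R R) i) :=
  subsingleton_ext_of_isRegular (fun _ ha => ⟨2, hsq (Ideal.pow_mem_pow ha 2)⟩) hxs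
    (isRegular_iff_isWeaklyRegular_of_subset_maximalIdeal hxs |>.2 hreg)

lemma projective_or_hasProjectiveDimensionLT {X N : ModuleCat.{u} R} [Module.Finite R X]
    [Module.Finite R N] {a : ℕ}
    (hN : ∀ i < xs.length, Subsingleton (Abelian.Ext
      (ModuleCat.of R (R ⧸ Ideal.ofList xs • (⊤ : Submodule R R))) N i))
    (hXN : ∀ i, a ≤ i → i ≤ a + xs.length → Subsingleton (Abelian.Ext X N i))
    (hXR : ∀ i, a + 1 ≤ i → i ≤ a + 1 + xs.length →
      Subsingleton (Abelian.Ext X (ModuleCat.of R R) i)) :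
    Projective N ∨ HasProjectiveDimensionLT X (a + 1) := by
  obtain ⟨n, f, hf, ker_le⟩ := exists_surjective_ker_le_maximalIdeal_smul_top (R := R) N
  have N_regular : IsWeaklyRegular N xs :=
    isWeaklyRegular_of_subsingleton_ext_quotient_ofList hxs hreg hN
  have ker_regular : IsWeaklyRegular (LinearMap.ker f) xs :=
    isWeaklyRegular_of_subsingleton_ext_quotient_ofList hxs hreg fun i hi =>
      subsingleton_ext_ker hf (fun j hj => hN j (by omega))
        (subsingleton_ext_quotient_ofList_self hxs hreg hsq i hi)
  let W := LinearMap.ker f ⧸ Ideal.ofList xs • (⊤ : Submodule R (LinearMap.ker f))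
  have ext_W : Subsingleton (Abelian.Ext X (ModuleCat.of R W) (a + 1)) :=
    subsingleton_ext_quotient_ofList_smul_top ker_regular fun i hai hi =>
      subsingleton_ext_ker hf (fun j hj => hXN j (by omega) (by omega)) (hXR i hai hi)
  rcases subsingleton_or_nontrivial W with W_subsingleton | W_nontrivial
  · left
    have ker_subsingleton : Subsingleton (LinearMap.ker f) := by
      by_contra ker_nontrivial
      rw [not_subsingleton_iff_nontrivial] at ker_nontrivial
      exact Submodule.top_ne_ideal_smul_of_le_jacobson_annihilator
        ((Ideal.span_le.2 hxs).trans (maximalIdeal_le_jacobson _))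
        (Submodule.Quotient.subsingleton_iff.1 W_subsingleton).symm
    exact projective_of_surjective_of_subsingleton_ker hf ker_subsingleton
  · right
    exact hasProjectiveDimensionLT_of_subsingleton_ext
      (maximalIdeal_le_annihilator_ker_quotient hsq hf ker_le N_regular) X ext_W

theorem hasProjectiveDimensionLT_or_hasProjectiveDimensionLT {X M : ModuleCat.{u} R}
    [Module.Finite R X] [Module.Finite R M] {a s : ℕ}
    (hM : ∀ i, i + s < xs.length → Subsingleton (Abelian.Ext
      (ModuleCat.of R (R ⧸ Ideal.ofList xs • (⊤ : Submodule R R))) M i))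
    (hXM : ∀ i, a ≤ i → i ≤ a + xs.length → Subsingleton (Abelian.Ext X M i))
    (hXR : ∀ i, a + 1 ≤ i → i ≤ a + xs.length + s + 1 →
      Subsingleton (Abelian.Ext X (ModuleCat.of R R) i)) :
    HasProjectiveDimensionLT M (s + 1) ∨ HasProjectiveDimensionLT X (a + s + 1) := by
  induction s generalizing M a with
  | zero =>
    rw [zero_add, ← projective_iff_hasProjectiveDimensionLT_one]
    exact projective_or_hasProjectiveDimensionLT hxs hreg hsq hM hXM
      fun i hai hi => hXR i hai (by omega)
  | succ s ih =>
    obtain ⟨F, _, _, _, _, f, hf⟩ := Module.exists_finite_presentation R M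
    have F_projective : Projective (ModuleCat.of R F) :=
      (IsProjective.iff_projective F).1 inferInstance
    have hS := LinearMap.shortExact_shortComplexKer hf
    rw [hS.hasProjectiveDimensionLT_X₃_iff s F_projective,
      show a + (s + 1) + 1 = a + 1 + s + 1 by omega]
    refine ih (fun i hi => subsingleton_ext_ker hf (fun j hj => hM j (by omega)) ?_)
      (fun i hai hi => subsingleton_ext_ker hf (fun j hj => hXM j (by omega) (by omega)) ?_)
      (fun i hai hi => hXR i (by omega) (by omega))
    · exact subsingleton_ext_quotient_ofList_self hxs hreg hsq i (by omega)
    · exact hXR i hai (by omega)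

end Dichotomy

section Depth

lemma length_le_ringKrullDim_of_isRegular {R : Type u} [CommRing R] [IsNoetherianRing R]
    [IsLocalRing R] {M : Type v} [AddCommGroup M] [Module R M] [Module.Finite R M]
    {rs : List R} (h : IsRegular M rs) : (rs.length : WithBot ℕ∞) ≤ ringKrullDim R := by
  have := Submodule.Quotient.nontrivial_iff.2 h.top_ne_smul.symm
  have supportDim_nonneg :
      0 ≤ Module.supportDim R (M ⧸ Ideal.ofList rs • (⊤ : Submodule R M)) :=
    have := (Module.nonempty_support_of_nontrivial (R := R)
      (M := M ⧸ Ideal.ofList rs • (⊤ : Submodule R M))).to_subtype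
    Order.krullDim_nonneg
  calc (rs.length : WithBot ℕ∞)
      ≤ Module.supportDim R (M ⧸ Ideal.ofList rs • (⊤ : Submodule R M)) + rs.length :=
        le_add_of_nonneg_left supportDim_nonneg
    _ = Module.supportDim R M := Module.supportDim_add_length_eq_supportDim_of_isRegular rs h
    _ ≤ ringKrullDim R := Module.supportDim_le_ringKrullDim R M

lemma exists_isRegular_length_eq_depth {R : Type} [CommRing R] [IsLocalRing R] {M : Type}
    [AddCommGroup M] [Module R M] [Nontrivial M] {t : ℕ} (ht : depth R M = t) :
    ∃ rs : List R, (∀ r ∈ rs, r ∈ maximalIdeal R) ∧ IsRegular M rs ∧ rs.length = t := by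
  let lengths : Set ℕ∞ := {n | ∃ rs : List R, (∀ r ∈ rs, r ∈ maximalIdeal R) ∧
    IsRegular M rs ∧ (rs.length : ℕ∞) = n}
  have : Nonempty lengths := ⟨0, [], by simp, .nil R M, rfl⟩
  have depth_mem : sSup lengths ∈ lengths :=
    ENat.sSup_mem_of_nonempty_of_lt_top (ht.trans_lt (ENat.natCast_lt_top t))
  obtain ⟨rs, hrs, rs_regular, length_eq⟩ := depth_mem
  exact ⟨rs, hrs, rs_regular, ENat.natCast_inj.1 (length_eq.trans ht)⟩

end Depth

lemma subsingleton_ext_of_extVanish {R : Type} [CommRing R] {M N : Type} [AddCommGroup M]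
    [Module R M] [AddCommGroup N] [Module R N] {i : ℕ} (hi : 1 ≤ i) (h : ExtVanish R M N i) :
    Subsingleton (Abelian.Ext (ModuleCat.of R M) (ModuleCat.of R N) i) := by
  obtain ⟨j, rfl⟩ := Nat.exists_eq_add_of_le' hi
  let P := projectiveResolution (ModuleCat.of R M)
  have homology_subsingleton :
      Subsingleton ((P.complex.linearYonedaObj R (ModuleCat.of R N)).homology (j + 1)) :=
    (P.isoExt (j + 1) (ModuleCat.of R N)).toLinearEquiv.toEquiv.subsingleton_congr.1 h
  have yoneda_exactAt :
      (P.complex.linearYonedaObj R (ModuleCat.of R N)).ExactAt (j + 1) :=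
    (HomologicalComplex.exactAt_iff_isZero_homology _ _).2
      (ModuleCat.isZero_of_subsingleton _)
  rw [HomologicalComplex.exactAt_iff' _ j (j + 1) (j + 2) (by simp) (by simp),
    ShortComplex.moduleCat_exact_iff] at yoneda_exactAt
  refine subsingleton_of_forall_eq 0 fun a => ?_
  obtain ⟨cocycle, d_comp_cocycle, rfl⟩ := P.extMk_surjective a (j + 2) rfl
  obtain ⟨g, hg⟩ := yoneda_exactAt cocycle d_comp_cocycle
  exact (P.extMk_eq_zero_iff _ _ _ _ j rfl).2 ⟨g, hg⟩

theorem statement15 (R : Type) [CommRing R] [IsNoetherianRing R] [IsLocalRing R]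
    (d : ℕ) (hdim : ringKrullDim R = (d : WithBot ℕ∞)) (hCM : depth R R = (d : ℕ∞))
    (hmin : HasMinimalMultiplicity R d)
    (M : Type) [AddCommGroup M] [Module R M] [Module.Finite R M]
    (t : ℕ) (ht : depth R M = (t : ℕ∞))
    (hExtMM : ∀ i : ℕ, 1 ≤ i → i ≤ d + 1 → ExtVanish R M M i)
    (hExtMR : ∀ j : ℕ, 1 ≤ j → j ≤ 2 * d - t + 2 → ExtVanish R M R j) :
    Module.Free R M := by
  rcases subsingleton_or_nontrivial M with _ | _
  · exact Module.Free.of_subsingleton R M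
  obtain ⟨ys, hys, ys_regular, rfl⟩ := exists_isRegular_length_eq_depth ht
  have depth_le : ys.length ≤ d := by
    exact_mod_cast (length_le_ringKrullDim_of_isRegular ys_regular).trans_eq hdim
  obtain ⟨xs, rfl, hxs, xs_regular, hsq⟩ := hmin
  replace hsq : maximalIdeal R ^ 2 ≤ Ideal.ofList xs := hsq.trans_le Ideal.mul_le_left
  have dichotomy := hasProjectiveDimensionLT_or_hasProjectiveDimensionLT hxs xs_regular hsq
    (X := ModuleCat.of R M) (M := ModuleCat.of R M) (a := 1) (s := xs.length - ys.length)
    (fun i hi => subsingleton_ext_of_isRegular (fun _ ha => ⟨2, hsq (Ideal.pow_mem_pow ha 2)⟩)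
      hys ys_regular i (by omega))
    (fun i h1 hi => subsingleton_ext_of_extVanish h1 (hExtMM i h1 (by omega)))
    (fun i h1 hi => subsingleton_ext_of_extVanish (by omega) (hExtMR i (by omega) (by omega)))
  have pd_lt : HasProjectiveDimensionLT (ModuleCat.of R M) (1 + (xs.length - ys.length) + 1) :=
    dichotomy.elim
      (fun _ => hasProjectiveDimensionLT_of_ge _ (xs.length - ys.length + 1) _ (by omega)) id
  have M_projective : Module.Projective R M := (IsProjective.iff_projective M).2
    (projective_of_subsingleton_ext_self pd_lt fun i h1 hi =>
      subsingleton_ext_of_extVanish h1 (hExtMR i h1 (by omega)))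
  exact Module.free_of_flat_of_isLocalRing
end
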